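/- arXiv:2510.25171 — 3 statements merged into one kernel-verified Lean document; each statement's English description precedes it below -/
import Mathlib

section
/- Let Ω ⊆ ℝⁿ be a nonempty open convex set and let d be a projectively flat asymmetric metric on Ω. Then the following are equivalent: (A) there exists a pseudo-norm function F on Ω satisfying the weak Lipschitz condition such that F induces d; (B) for every x ∈ Ω there exist constants r > 0, c > 0, C > 0 with the open Euclidean ball B(x,r) contained in Ω such that for all x₁, x₂ ∈ B(x,r) and all y ∈ ℝⁿ with x₁ + y ∈ B(x,r) and x₂ + y ∈ B(x,r) one has c·‖x₂ − x₁‖ ≤ d(x₁,x₂) ≤ C·‖x₂ − x₁‖ and |d(x₁, x₁ + y) − d(x₂, x₂ + y)| ≤ C·‖y‖·‖x₂ − x₁‖. Moreover, when these hold, for any such inducing pseudo-norm function F: d is C^∞ on {(x₁,x₂) ∈ Ω × Ω : x₁ ≠ x₂} if and only if F is C^∞ on Ω × (ℝⁿ \ {0}). -/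
open scoped ENNReal

noncomputable section

/-- The `d`-length of a curve `γ : ℝ → ℝⁿ` over `[0,1]`: the supremum, over all finite
partitions `0 = t₀ < t₁ < ⋯ < t_N = 1`, of `∑ d(γ(t_{i−1}), γ(t_i))`, valued in `[0,∞]`. -/
def dLength (n : ℕ) (d : EuclideanSpace ℝ (Fin n) → EuclideanSpace ℝ (Fin n) → ℝ)
    (γ : ℝ → EuclideanSpace ℝ (Fin n)) : ℝ≥0∞ :=
  sSup {s : ℝ≥0∞ | ∃ (N : ℕ) (t : Fin (N + 1) → ℝ), StrictMono t ∧ t 0 = 0 ∧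
    t (Fin.last N) = 1 ∧
    s = ∑ i : Fin N, ENNReal.ofReal (d (γ (t i.castSucc)) (γ (t i.succ)))}

/-- An asymmetric metric on `Ω`: continuous, nonnegative and vanishing exactly on the
diagonal, satisfying the triangle inequality. -/
def IsAsymmetricMetric (n : ℕ) (Ω : Set (EuclideanSpace ℝ (Fin n)))
    (d : EuclideanSpace ℝ (Fin n) → EuclideanSpace ℝ (Fin n) → ℝ) : Prop :=
  ContinuousOn (fun p : EuclideanSpace ℝ (Fin n) × EuclideanSpace ℝ (Fin n) => d p.1 p.2)
    (Ω ×ˢ Ω) ∧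
  (∀ x₁ ∈ Ω, ∀ x₂ ∈ Ω, 0 ≤ d x₁ x₂ ∧ (d x₁ x₂ = 0 ↔ x₁ = x₂)) ∧
  (∀ x₁ ∈ Ω, ∀ x₂ ∈ Ω, ∀ x₃ ∈ Ω, d x₁ x₃ ≤ d x₁ x₂ + d x₂ x₃)

/-- `d` is projectively flat on `Ω`: the `d`-length of the straight segment from `x₁` to
`x₂` equals `d(x₁,x₂)`. -/
def IsProjFlatMetric (n : ℕ) (Ω : Set (EuclideanSpace ℝ (Fin n)))
    (d : EuclideanSpace ℝ (Fin n) → EuclideanSpace ℝ (Fin n) → ℝ) : Prop :=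
  ∀ x₁ ∈ Ω, ∀ x₂ ∈ Ω,
    ENNReal.ofReal (d x₁ x₂) = dLength n d (fun t : ℝ => (1 - t) • x₁ + t • x₂)

/-- A pseudo-norm function on `Ω`: continuous in both variables, and for each `x ∈ Ω` the
function `F(x, ·)` is nonnegative (vanishing only at `0`), positively 1-homogeneous and
subadditive. -/
def IsPseudoNormFunction (n : ℕ) (Ω : Set (EuclideanSpace ℝ (Fin n)))
    (F : EuclideanSpace ℝ (Fin n) → EuclideanSpace ℝ (Fin n) → ℝ) : Prop :=
  ContinuousOn (fun p : EuclideanSpace ℝ (Fin n) × EuclideanSpace ℝ (Fin n) => F p.1 p.2)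
    (Ω ×ˢ (Set.univ : Set (EuclideanSpace ℝ (Fin n)))) ∧
  ∀ x ∈ Ω,
    (∀ y, 0 ≤ F x y ∧ (F x y = 0 ↔ y = 0)) ∧
    (∀ α : ℝ, 0 < α → ∀ y, F x (α • y) = α * F x y) ∧
    (∀ y₁ y₂, F x (y₁ + y₂) ≤ F x y₁ + F x y₂)

/-- A curve `γ : ℝ → ℝⁿ` is piecewise `C¹` on `[0,1]` if there is a partition
`0 = s₀ < s₁ < ⋯ < s_k = 1` with `γ` continuously differentiable on each `[s_{i−1}, s_i]`. -/
def PiecewiseC1 (n : ℕ) (γ : ℝ → EuclideanSpace ℝ (Fin n)) : Prop :=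
  ∃ (k : ℕ) (s : Fin (k + 1) → ℝ), StrictMono s ∧ s 0 = 0 ∧ s (Fin.last k) = 1 ∧
    ∀ i : Fin k, ContDiffOn ℝ 1 γ (Set.Icc (s i.castSucc) (s i.succ))

/-- `F` induces `d`: `d(x₁,x₂)` is the infimum of `∫₀¹ F(γ(t), γ′(t)) dt` over all
piecewise `C¹` curves in `Ω` from `x₁` to `x₂`. -/
def InducesDist (n : ℕ) (Ω : Set (EuclideanSpace ℝ (Fin n)))
    (F : EuclideanSpace ℝ (Fin n) → EuclideanSpace ℝ (Fin n) → ℝ)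
    (d : EuclideanSpace ℝ (Fin n) → EuclideanSpace ℝ (Fin n) → ℝ) : Prop :=
  ∀ x₁ ∈ Ω, ∀ x₂ ∈ Ω,
    d x₁ x₂ = sInf {L : ℝ | ∃ γ : ℝ → EuclideanSpace ℝ (Fin n), PiecewiseC1 n γ ∧
      (∀ t ∈ Set.Icc (0 : ℝ) 1, γ t ∈ Ω) ∧ γ 0 = x₁ ∧ γ 1 = x₂ ∧
      L = ∫ t in (0 : ℝ)..1, F (γ t) (deriv γ t)}

/-- The weak Lipschitz condition of Busemann–Mayer for a pseudo-norm function. -/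
def WeakLipschitz (n : ℕ) (Ω : Set (EuclideanSpace ℝ (Fin n)))
    (F : EuclideanSpace ℝ (Fin n) → EuclideanSpace ℝ (Fin n) → ℝ) : Prop :=
  ∀ x ∈ Ω, ∃ U ∈ nhds x, U ⊆ Ω ∧ ∃ C : ℝ, 0 < C ∧
    ∀ x₁ ∈ U, ∀ x₂ ∈ U, ∀ y, |F x₁ y - F x₂ y| ≤ C * ‖y‖ * ‖x₁ - x₂‖

/-!
Projective flatness says that `d` is additive along straight segments. If `F` induces `d`, then
`F x y` is forced to be the one-sided derivative of `d x` at `x` in the direction `y`: segments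
bound `d` from above, and a multiple of the truncated potential `z ↦ min (F x (z - x)) m`, whose
directional derivatives are dominated by `F`, bounds it from below. Integrating along segments
recovers `d x (x + y) = ∫₀¹ F (x + t • y) y dt`, so estimates on `F` and on `d` pass to each other.

Conversely, under (B) the function `φ t = d x (x + t • y)` is monotone near `0` and
`φ (s + u) - φ s - φ u = O(s u)`, so `φ t / t` has a limit `F x y` as `t → 0⁺`. Every curve from `x`
to `z` has `F`-length at least `d x z` because `d x` is itself a potential dominated by `F`, and the
segment attains this bound.

For smoothness, `d` is a parametric integral of `F`, and `F x y` is an ordinary derivative of `d`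
at the point `(x - τ • y, x)` off the diagonal.
-/

open Set Filter Topology MeasureTheory

section ParametricIntegral

theorem eventually_forall_mem_and_norm_le_of_isCompact {X Y V : Type*} [TopologicalSpace X]
    [TopologicalSpace Y] [NormedAddCommGroup V] {W : Set (X × Y)} (hW : IsOpen W) {K : Set Y}
    (hK : IsCompact K) {f : X × Y → V} (hf : ContinuousOn f W) {p : X}
    (hp : ∀ t ∈ K, (p, t) ∈ W) :
    ∃ M, ∀ᶠ q in 𝓝 p, ∀ t ∈ K, (q, t) ∈ W ∧ ‖f (q, t)‖ ≤ M := by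
  obtain ⟨M, hM⟩ := hK.exists_bound_of_continuousOn
    (hf.comp (f := fun t => (p, t)) (by fun_prop) hp)
  refine ⟨M + 1, hK.eventually_forall_of_forall_eventually fun t ht => ?_⟩
  have hft : ContinuousAt f (p, t) := hf.continuousAt (hW.mem_nhds (hp t ht))
  filter_upwards [hW.mem_nhds (hp t ht),
    hft.norm.eventually_lt_const ((hM t ht).trans_lt (lt_add_one M))] with z hzW hzM
  exact ⟨hzW, hzM.le⟩

theorem intervalIntegrable_of_continuousOn_prod {X V : Type*} [TopologicalSpace X]
    [NormedAddCommGroup V] {W : Set (X × ℝ)} {f : X × ℝ → V} (hf : ContinuousOn f W) {a b : ℝ}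
    {q : X} (hq : ∀ t ∈ uIcc a b, (q, t) ∈ W) :
    IntervalIntegrable (fun t => f (q, t)) volume a b :=
  (hf.comp (f := fun t => (q, t)) (by fun_prop) hq).intervalIntegrable

theorem hasFDerivAt_integral_of_contDiffOn {H V : Type*} [NormedAddCommGroup H] [NormedSpace ℝ H]
    [NormedAddCommGroup V] [NormedSpace ℝ V] {W : Set (H × ℝ)} (hW : IsOpen W) {G : H × ℝ → V}
    (hG : ContDiffOn ℝ 1 G W) {a b : ℝ} {p : H} (hp : ∀ t ∈ uIcc a b, (p, t) ∈ W) :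
    HasFDerivAt (fun q => ∫ t in a..b, G (q, t))
      (∫ t in a..b, (fderiv ℝ G (p, t)).comp (ContinuousLinearMap.inl ℝ H ℝ)) p := by
  have hG' : ContinuousOn (fun q => (fderiv ℝ G q).comp (ContinuousLinearMap.inl ℝ H ℝ)) W :=
    (hG.continuousOn_fderiv_of_isOpen hW le_rfl).clm_comp continuousOn_const
  obtain ⟨M, hM⟩ := eventually_forall_mem_and_norm_le_of_isCompact hW isCompact_uIcc hG' hp
  refine intervalIntegral.hasFDerivAt_integral_of_dominated_of_fderiv_le
    (F' := fun q t => (fderiv ℝ G (q, t)).comp (ContinuousLinearMap.inl ℝ H ℝ))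
    (bound := fun _ => M) hM ?_ (intervalIntegrable_of_continuousOn_prod hG.continuousOn hp)
    (intervalIntegrable_of_continuousOn_prod hG' hp).def'.aestronglyMeasurable ?_
    intervalIntegrable_const ?_
  · filter_upwards [hM] with q hq
    exact (intervalIntegrable_of_continuousOn_prod hG.continuousOn
      fun t ht => (hq t ht).1).def'.aestronglyMeasurable
  · exact Eventually.of_forall fun t ht q hq => (hq t (uIoc_subset_uIcc ht)).2
  · refine Eventually.of_forall fun t ht q hq => ?_
    have hGq : DifferentiableAt ℝ G (q, t) :=
      (hG.differentiableOn one_ne_zero).differentiableAt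
        (hW.mem_nhds (hq t (uIoc_subset_uIcc ht)).1)
    exact hGq.hasFDerivAt.comp q (hasFDerivAt_prodMk_left q t)

-- The restriction on universes lets the induction pass from `V` to `H →L[ℝ] V`.
theorem contDiffOn_integral_of_contDiffOn_of_max_universe.{u, v} {H : Type u}
    {V : Type (max u v)} [NormedAddCommGroup H] [NormedSpace ℝ H] [NormedAddCommGroup V]
    [NormedSpace ℝ V] {W : Set (H × ℝ)} (hW : IsOpen W)
    {U : Set H} (hU : IsOpen U) {a b : ℝ} (hUW : ∀ p ∈ U, ∀ t ∈ uIcc a b, (p, t) ∈ W)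
    {G : H × ℝ → V} (hG : ContDiffOn ℝ (⊤ : ℕ∞) G W) :
    ContDiffOn ℝ (⊤ : ℕ∞) (fun q => ∫ t in a..b, G (q, t)) U := by
  rw [contDiffOn_infty]
  intro k
  induction k generalizing V with
  | zero =>
    rw [Nat.cast_zero, contDiffOn_zero]
    exact fun p hp => (hasFDerivAt_integral_of_contDiffOn hW (hG.of_le (by simp))
      (hUW p hp)).continuousAt.continuousWithinAt
  | succ k ih =>
    have hderiv (p : H) (hp : p ∈ U) := hasFDerivAt_integral_of_contDiffOn hW
      (hG.of_le (by simp)) (hUW p hp)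
    rw [Nat.cast_succ, contDiffOn_succ_iff_fderiv_of_isOpen hU]
    refine ⟨fun p hp => (hderiv p hp).differentiableAt.differentiableWithinAt, by simp, ?_⟩
    have hG' : ContDiffOn ℝ (⊤ : ℕ∞)
        (fun q => (fderiv ℝ G q).comp (ContinuousLinearMap.inl ℝ H ℝ)) W :=
      ((contDiffOn_infty_iff_fderiv_of_isOpen hW).1 hG).2.clm_comp contDiffOn_const
    exact (ih hG').congr fun p hp => (hderiv p hp).fderiv

theorem contDiffOn_integral_of_contDiffOn.{u, v} {H : Type u} {V : Type v}
    [NormedAddCommGroup H] [NormedSpace ℝ H] [NormedAddCommGroup V] [NormedSpace ℝ V]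
    {W : Set (H × ℝ)} (hW : IsOpen W) {U : Set H} (hU : IsOpen U) {a b : ℝ}
    (hUW : ∀ p ∈ U, ∀ t ∈ uIcc a b, (p, t) ∈ W) {G : H × ℝ → V}
    (hG : ContDiffOn ℝ (⊤ : ℕ∞) G W) :
    ContDiffOn ℝ (⊤ : ℕ∞) (fun q => ∫ t in a..b, G (q, t)) U := by
  let L : V ≃L[ℝ] ULift.{u} V := ContinuousLinearEquiv.ulift.symm
  have hLG := contDiffOn_integral_of_contDiffOn_of_max_universe hW hU hUW
    (L.contDiff.comp_contDiffOn hG)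
  rw [← L.comp_contDiffOn_iff]
  refine hLG.congr fun p _ => ?_
  simp only [Function.comp_apply, intervalIntegral, map_sub, L.integral_comp_comm]

end ParametricIntegral

section RightSlopes

theorem sub_le_integral_of_eventually_slope_lt {φ g : ℝ → ℝ} {a b : ℝ} (hab : a ≤ b)
    (hφ : ContinuousOn φ (Icc a b)) (hg : ContinuousOn g (Icc a b))
    (hslope : ∀ x ∈ Ico a b, ∀ r, g x < r → ∀ᶠ z in 𝓝[>] x, slope φ x z < r) :
    φ b - φ a ≤ ∫ t in a..b, g t := by
  have hint : IntervalIntegrable g volume a b := hg.intervalIntegrable_of_Icc hab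
  have hprim : ∀ x ∈ Ico a b,
      HasDerivWithinAt (fun t => φ a + ∫ s in a..t, g s) (g x) (Ici x) x := by
    intro x hx
    have hxI := Ico_subset_Icc_self hx
    have hIcc : Icc a b ∈ 𝓝[>] x :=
      mem_of_superset (Ioc_mem_nhdsGT hx.2) fun t ht => ⟨hx.1.trans ht.1.le, ht.2⟩
    refine (intervalIntegral.integral_hasDerivWithinAt_right
      (hint.mono_set (uIcc_subset_uIcc_left (Icc_subset_uIcc hxI))) ⟨Icc a b, hIcc, ?_⟩
      ((hg x hxI).mono_of_mem_nhdsWithin hIcc)).const_add _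
    exact hg.aestronglyMeasurable measurableSet_Icc
  have hle := image_le_of_liminf_slope_right_le_deriv_boundary hφ
    (B := fun t => φ a + ∫ s in a..t, g s) (by simp)
    (continuousOn_const.add ?_) hprim
    (fun x hx r hr => (hslope x hx r hr).frequently) (right_mem_Icc.2 hab)
  · linarith
  · have := intervalIntegral.continuousOn_primitive_interval' hint left_mem_uIcc
    rwa [uIcc_of_le hab] at this

theorem derivWithin_Icc_ae_eq_deriv {V : Type*} [NormedAddCommGroup V] [NormedSpace ℝ V]
    (γ : ℝ → V) {a b : ℝ} (hab : a ≤ b) :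
    derivWithin γ (Icc a b) =ᵐ[volume.restrict (uIoc a b)] deriv γ := by
  rw [uIoc_of_le hab, ← restrict_Ioo_eq_restrict_Ioc]
  filter_upwards [ae_restrict_mem measurableSet_Ioo] with t ht
  exact derivWithin_of_mem_nhds (Icc_mem_nhds ht.1 ht.2)

theorem exists_differentiableAt_of_monotoneOn_Ioo {φ : ℝ → ℝ} {a b : ℝ} (hab : a < b)
    (hφ : MonotoneOn φ (Ioo a b)) : ∃ s ∈ Ioo a b, DifferentiableAt ℝ φ s := by
  have : (ae (volume.restrict (Ioo a b))).NeBot := by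
    rw [ae_neBot, Ne, Measure.restrict_eq_zero, Real.volume_Ioo]
    simpa using hab
  obtain ⟨s, hs, hmem⟩ := ((hφ.ae_differentiableWithinAt measurableSet_Ioo).and
    (ae_restrict_mem measurableSet_Ioo)).exists
  exact ⟨s, hmem, hs.differentiableAt (Ioo_mem_nhds hmem.1 hmem.2)⟩

theorem tendsto_add_left_nhdsGT_zero (s : ℝ) : Tendsto (s + ·) (𝓝[>] 0) (𝓝[>] s) := by
  rw [Tendsto, map_add_left_nhdsGT, add_zero]

theorem tendsto_sub_right_nhdsGT_self (s : ℝ) : Tendsto (· - s) (𝓝[>] s) (𝓝[>] 0) := by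
  rw [Tendsto, map_subRight_nhdsGT, sub_self]

theorem exists_tendsto_of_forall_eventually_dist_lt {α X : Type*} [PseudoMetricSpace X]
    [CompleteSpace X] {l : Filter α} [l.NeBot] {f : α → X}
    (h : ∀ ε > 0, ∃ c, ∀ᶠ u in l, dist (f u) c < ε) : ∃ c, Tendsto f l (𝓝 c) := by
  rw [← cauchy_map_iff_exists_tendsto, Metric.cauchy_iff]
  refine ⟨inferInstance, fun ε hε => ?_⟩
  obtain ⟨c, hc⟩ := h (ε / 2) (half_pos hε)
  refine ⟨Metric.ball c (ε / 2), hc, fun a ha b hb => ?_⟩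
  calc dist a b ≤ dist a c + dist b c := dist_triangle_right a b c
    _ < ε / 2 + ε / 2 := add_lt_add ha hb
    _ = ε := add_halves ε

theorem eventually_dist_div_deriv_lt_of_abs_sub_sub_le {φ : ℝ → ℝ} {s K ε : ℝ} (hε : 0 < ε)
    (hs : DifferentiableAt ℝ φ s)
    (hφ : ∀ᶠ u in 𝓝[>] 0, |φ (s + u) - φ s - φ u| ≤ K * s * u) :
    ∀ᶠ u in 𝓝[>] 0, dist (φ u / u) (deriv φ s) < K * s + ε := by
  have hslope : Tendsto (slope φ s) (𝓝[>] s) (𝓝 (deriv φ s)) :=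
    (hasDerivWithinAt_iff_tendsto_slope' self_notMem_Ioi).1 hs.hasDerivAt.hasDerivWithinAt
  have hnear := Metric.tendsto_nhds.1 (hslope.comp (tendsto_add_left_nhdsGT_zero s)) ε hε
  filter_upwards [hnear, hφ, self_mem_nhdsWithin] with u hu hφu (hu0 : 0 < u)
  rw [Function.comp_apply, slope_def_field, add_sub_cancel_left] at hu
  have hquot : dist (φ u / u) ((φ (s + u) - φ s) / u) ≤ K * s := by
    rwa [Real.dist_eq, ← sub_div, abs_div, abs_of_pos hu0, div_le_iff₀ hu0, abs_sub_comm]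
  exact (dist_triangle _ _ _).trans_lt (add_lt_add_of_le_of_lt hquot hu)

-- A monotone `φ` has a derivative at points `s` arbitrarily close to `0`, and there `φ' s` is
-- within `K s + o(1)` of the quotients `φ u / u`.
theorem exists_tendsto_div_of_abs_sub_sub_le {φ : ℝ → ℝ} {T K : ℝ} (hT : 0 < T)
    (hmono : MonotoneOn φ (Ioo 0 T))
    (hφ : ∀ s > 0, ∀ u > 0, s + u < T → |φ (s + u) - φ s - φ u| ≤ K * s * u) :
    ∃ l, Tendsto (fun t => φ t / t) (𝓝[>] 0) (𝓝 l) := by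
  refine exists_tendsto_of_forall_eventually_dist_lt fun ε hε => ?_
  have hsmall : ∀ᶠ S in 𝓝[>] (0 : ℝ), |K| * S < ε / 2 := by
    have : Tendsto (fun S : ℝ => |K| * S) (𝓝[>] 0) (𝓝 0) :=
      (Continuous.tendsto' (by fun_prop) _ _ (mul_zero _)).mono_left nhdsWithin_le_nhds
    exact this.eventually_lt_const (half_pos hε)
  obtain ⟨S, hKS, hS⟩ := (hsmall.and (Ioo_mem_nhdsGT hT)).exists
  obtain ⟨s, hs, hdiff⟩ := exists_differentiableAt_of_monotoneOn_Ioo hS.1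
    (hmono.mono (Ioo_subset_Ioo_right hS.2.le))
  have hKs : K * s ≤ ε / 2 := calc
    K * s ≤ |K| * S := mul_le_mul (le_abs_self K) hs.2.le hs.1.le (abs_nonneg K)
    _ ≤ ε / 2 := hKS.le
  have hnear : ∀ᶠ u in 𝓝[>] 0, |φ (s + u) - φ s - φ u| ≤ K * s * u := by
    filter_upwards [Ioo_mem_nhdsGT (sub_pos.2 (hs.2.trans hS.2))] with u hu
    exact hφ s hs.1 u hu.1 (by linarith [hu.2])
  refine ⟨deriv φ s, ?_⟩
  filter_upwards [eventually_dist_div_deriv_lt_of_abs_sub_sub_le (half_pos hε) hdiff hnear]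
    with u hu using by linarith

end RightSlopes

section HadamardDerivative

theorem eventually_fst_pos_nhdsGT_zero_prod {α : Type*} (l : Filter α) :
    ∀ᶠ p : ℝ × α in 𝓝[>] 0 ×ˢ l, 0 < p.1 :=
  tendsto_fst.eventually self_mem_nhdsWithin

variable {E : Type*} [NormedAddCommGroup E] [NormedSpace ℝ E]

/-- The upper Hadamard directional derivative of `P` at `z` in the direction `v` is at most `c`:
the difference quotients are taken along directions varying near `v`. -/
def HadamardDerivLE (P : E → ℝ) (z v : E) (c : ℝ) : Prop :=
  ∀ r > c, ∀ᶠ p : ℝ × E in 𝓝[>] 0 ×ˢ 𝓝 v, P (z + p.1 • p.2) - P z < p.1 * r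

namespace HadamardDerivLE

variable {P : E → ℝ} {z v : E} {c : ℝ}

theorem mono (h : HadamardDerivLE P z v c) {c' : ℝ} (hc : c ≤ c') : HadamardDerivLE P z v c' :=
  fun r hr => h r (hc.trans_lt hr)

theorem const_mul (h : HadamardDerivLE P z v c) {a : ℝ} (ha : 0 < a) :
    HadamardDerivLE (fun w => a * P w) z v (a * c) := by
  intro r hr
  filter_upwards [h (r / a) ((lt_div_iff₀' ha).2 hr)] with p hp
  calc a * P (z + p.1 • p.2) - a * P z = a * (P (z + p.1 • p.2) - P z) := by ring
    _ < a * (p.1 * (r / a)) := mul_lt_mul_of_pos_left hp ha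
    _ = p.1 * r := by field_simp

theorem min_const (h : HadamardDerivLE P z v c) (hc : 0 ≤ c) (m : ℝ) :
    HadamardDerivLE (fun w => min (P w) m) z v c := by
  intro r hr
  filter_upwards [h r hr, eventually_fst_pos_nhdsGT_zero_prod (𝓝 v)] with p hp hp0
  have hpr : 0 < p.1 * r := mul_pos hp0 (hc.trans_lt hr)
  rcases min_cases (P z) m with ⟨hmin, -⟩ | ⟨hmin, -⟩ <;> rw [hmin]
  · linarith [min_le_left (P (z + p.1 • p.2)) m]
  · linarith [min_le_right (P (z + p.1 • p.2)) m]

theorem min_const_of_le {m : ℝ} (hm : m ≤ P z) (v : E) :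
    HadamardDerivLE (fun w => min (P w) m) z v 0 := by
  intro r hr
  filter_upwards [eventually_fst_pos_nhdsGT_zero_prod (𝓝 v)] with p hp0
  rw [min_eq_right hm]
  linarith [min_le_right (P (z + p.1 • p.2)) m, mul_pos hp0 hr]

theorem eventually_slope_lt {γ : ℝ → E} {x r : ℝ} (h : HadamardDerivLE P (γ x) v c)
    (hγ : HasDerivWithinAt γ v (Ioi x) x) (hr : c < r) :
    ∀ᶠ t in 𝓝[>] x, slope (P ∘ γ) x t < r := by
  have hslope : Tendsto (slope γ x) (𝓝[>] x) (𝓝 v) :=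
    (hasDerivWithinAt_iff_tendsto_slope' self_notMem_Ioi).1 hγ
  filter_upwards [((tendsto_sub_right_nhdsGT_self x).prodMk hslope).eventually (h r hr),
    self_mem_nhdsWithin] with t ht (hxt : x < t)
  rw [sub_smul_slope, vsub_eq_sub, add_sub_cancel] at ht
  rwa [slope_def_field, div_lt_iff₀ (sub_pos.2 hxt), mul_comm]

end HadamardDerivLE

variable {Ω : Set E} {F : E → E → ℝ} {γ : ℝ → E} {a b : ℝ}

theorem continuousOn_comp_derivWithin (hF : ContinuousOn (fun p : E × E => F p.1 p.2) (Ω ×ˢ univ))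
    (hab : a < b) (hγ : ContDiffOn ℝ 1 γ (Icc a b)) (hγΩ : MapsTo γ (Icc a b) Ω) :
    ContinuousOn (fun t => F (γ t) (derivWithin γ (Icc a b) t)) (Icc a b) :=
  hF.comp (hγ.continuousOn.prodMk (hγ.continuousOn_derivWithin (uniqueDiffOn_Icc hab) le_rfl))
    fun _ ht => ⟨hγΩ ht, mem_univ _⟩

theorem comp_derivWithin_ae_eq (F : E → E → ℝ) (γ : ℝ → E) (hab : a ≤ b) :
    (fun t => F (γ t) (derivWithin γ (Icc a b) t)) =ᵐ[volume.restrict (uIoc a b)]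
      fun t => F (γ t) (deriv γ t) := by
  filter_upwards [derivWithin_Icc_ae_eq_deriv γ hab] with t ht
  rw [ht]

theorem intervalIntegrable_comp_deriv
    (hF : ContinuousOn (fun p : E × E => F p.1 p.2) (Ω ×ˢ univ))
    (hab : a < b) (hγ : ContDiffOn ℝ 1 γ (Icc a b)) (hγΩ : MapsTo γ (Icc a b) Ω) :
    IntervalIntegrable (fun t => F (γ t) (deriv γ t)) volume a b :=
  ((continuousOn_comp_derivWithin hF hab hγ hγΩ).intervalIntegrable_of_Icc hab.le).congr_ae
    (comp_derivWithin_ae_eq F γ hab.le)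

theorem sub_le_integral_of_hadamardDerivLE
    (hF : ContinuousOn (fun p : E × E => F p.1 p.2) (Ω ×ˢ univ)) {P : E → ℝ}
    (hP : ContinuousOn P Ω) (hPF : ∀ z ∈ Ω, ∀ v, HadamardDerivLE P z v (F z v))
    (hab : a < b) (hγ : ContDiffOn ℝ 1 γ (Icc a b)) (hγΩ : MapsTo γ (Icc a b) Ω) :
    P (γ b) - P (γ a) ≤ ∫ t in a..b, F (γ t) (deriv γ t) := by
  rw [← intervalIntegral.integral_congr_ae_restrict (comp_derivWithin_ae_eq F γ hab.le)]
  refine sub_le_integral_of_eventually_slope_lt (φ := P ∘ γ) hab.le (hP.comp hγ.continuousOn hγΩ)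
    (continuousOn_comp_derivWithin hF hab hγ hγΩ) fun x hx r hr => ?_
  have hxI := Ico_subset_Icc_self hx
  have hderiv : HasDerivWithinAt γ (derivWithin γ (Icc a b) x) (Ioi x) x :=
    (hγ.differentiableOn one_ne_zero x hxI).hasDerivWithinAt.mono_of_mem_nhdsWithin
      (mem_of_superset (Ioc_mem_nhdsGT hx.2) fun t ht => ⟨hx.1.trans ht.1.le, ht.2⟩)
  exact (hPF (γ x) (hγΩ hxI) _).eventually_slope_lt hderiv hr

end HadamardDerivative

section PosHomogeneous

variable {V : Type*} [AddCommGroup V] [Module ℝ V]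

/-- Positive homogeneity of degree one, as satisfied by the functions `F(x, ·)`. -/
def IsPosHomogeneous (f : V → ℝ) : Prop :=
  ∀ α : ℝ, 0 < α → ∀ y, f (α • y) = α * f y

namespace IsPosHomogeneous

theorem map_zero {f : V → ℝ} (hf : IsPosHomogeneous f) : f 0 = 0 := by
  have h := hf 2 two_pos 0
  rw [smul_zero] at h
  linarith

theorem const_mul {f : V → ℝ} (hf : IsPosHomogeneous f) (c : ℝ) :
    IsPosHomogeneous fun v => c * f v := by
  intro α hα v
  simp only [hf α hα, mul_left_comm]

variable {E : Type*} [NormedAddCommGroup E] [NormedSpace ℝ E]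

theorem norm : IsPosHomogeneous (norm : E → ℝ) :=
  fun _ hα v => norm_smul_of_nonneg hα.le v

theorem le_of_le_on_sphere {f g : E → ℝ} (hf : IsPosHomogeneous f) (hg : IsPosHomogeneous g)
    (h : ∀ u ∈ Metric.sphere (0 : E) 1, f u ≤ g u) (v : E) : f v ≤ g v := by
  rcases eq_or_ne v 0 with rfl | hv
  · rw [hf.map_zero, hg.map_zero]
  have hpos : 0 < ‖v‖ := norm_pos_iff.2 hv
  have hunit : ‖v‖⁻¹ • v ∈ Metric.sphere (0 : E) 1 := by
    rw [mem_sphere_zero_iff_norm, norm_smul, norm_inv, norm_norm, inv_mul_cancel₀ hpos.ne']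
  have hfg := h _ hunit
  rw [hf _ (inv_pos.2 hpos), hg _ (inv_pos.2 hpos)] at hfg
  exact le_of_mul_le_mul_left hfg (inv_pos.2 hpos)

theorem eventually_forall_le_of_lt_on_sphere [ProperSpace E] {A B : E → E → ℝ} {x : E}
    (hA : ∀ᶠ z in 𝓝 x, IsPosHomogeneous (A z)) (hB : ∀ᶠ z in 𝓝 x, IsPosHomogeneous (B z))
    (hAcont : ∀ u, ContinuousAt (fun p : E × E => A p.1 p.2) (x, u))
    (hBcont : ∀ u, ContinuousAt (fun p : E × E => B p.1 p.2) (x, u))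
    (hlt : ∀ u ∈ Metric.sphere (0 : E) 1, A x u < B x u) :
    ∀ᶠ z in 𝓝 x, ∀ v, A z v ≤ B z v := by
  have hsphere : ∀ᶠ z in 𝓝 x, ∀ u ∈ Metric.sphere (0 : E) 1, A z u ≤ B z u :=
    (isCompact_sphere (0 : E) 1).eventually_forall_of_forall_eventually fun u hu =>
      ((hAcont u).eventually_lt (hBcont u) (hlt u hu)).mono fun _ h => h.le
  filter_upwards [hA, hB, hsphere] with z hAz hBz hz
  exact hAz.le_of_le_on_sphere hBz hz

theorem hadamardDerivLE_comp_sub {f : E → ℝ} (hf : IsPosHomogeneous f)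
    (hadd : ∀ y₁ y₂, f (y₁ + y₂) ≤ f y₁ + f y₂) (hcont : Continuous f) (x w v : E) :
    HadamardDerivLE (fun z => f (z - x)) w v (f v) := by
  intro r hr
  have hnear : ∀ᶠ p : ℝ × E in 𝓝[>] 0 ×ˢ 𝓝 v, f p.2 < r :=
    tendsto_snd.eventually (hcont.continuousAt.eventually_lt_const hr)
  filter_upwards [hnear, eventually_fst_pos_nhdsGT_zero_prod (𝓝 v)] with p hp hp0
  have hsub := hadd (w - x) (p.1 • p.2)
  rw [hf p.1 hp0, sub_add_eq_add_sub] at hsub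
  linarith [mul_lt_mul_of_pos_left hp hp0]

end IsPosHomogeneous

end PosHomogeneous

section Segments

variable {E : Type*} [NormedAddCommGroup E] [NormedSpace ℝ E]

theorem add_smul_mem_segment {s t : ℝ} (hs : 0 ≤ s) (hst : s ≤ t) (x y : E) :
    x + s • y ∈ segment ℝ x (x + t • y) := by
  rw [segment_eq_image']
  refine ⟨s / t, ⟨div_nonneg hs (hs.trans hst), div_le_one_of_le₀ hst (hs.trans hst)⟩, ?_⟩
  have hcancel : s / t * t = s := div_mul_cancel_of_imp fun ht => le_antisymm (hst.trans_eq ht) hs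
  simp only [add_sub_cancel_left, smul_smul, hcancel]

theorem eventually_add_smul_mem {Ω : Set E} (hΩ : IsOpen Ω) {x : E} (hx : x ∈ Ω) (y : E) :
    ∀ᶠ t : ℝ in 𝓝[>] 0, x + t • y ∈ Ω := by
  have hcont : ContinuousAt (fun t : ℝ => x + t • y) 0 := by fun_prop
  refine (hcont.eventually_mem ?_).filter_mono nhdsWithin_le_nhds
  simpa using hΩ.mem_nhds hx

theorem hasDerivAt_add_smul (x y : E) (t : ℝ) : HasDerivAt (fun s : ℝ => x + s • y) y t := by
  simpa using ((hasDerivAt_id t).smul_const y).const_add x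

/-- Additivity of `d` along straight segments: the form in which projective flatness is used. -/
def IsAdditiveOnSegments (Ω : Set E) (d : E → E → ℝ) : Prop :=
  ∀ x ∈ Ω, ∀ z ∈ Ω, ∀ w ∈ segment ℝ x z, d x w + d w z = d x z

namespace IsAdditiveOnSegments

variable {Ω : Set E} {d : E → E → ℝ} {x y : E} {s t : ℝ}

theorem mono (h : IsAdditiveOnSegments Ω d) {B : Set E} (hB : B ⊆ Ω) :
    IsAdditiveOnSegments B d :=
  fun x hx z hz => h x (hB hx) z (hB hz)

theorem self_eq_zero (h : IsAdditiveOnSegments Ω d) (hx : x ∈ Ω) : d x x = 0 := by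
  linarith [h x hx x hx x (left_mem_segment ℝ x x)]

theorem add_smul_sub (h : IsAdditiveOnSegments Ω d) (hx : x ∈ Ω) (hs : 0 ≤ s) (hst : s ≤ t)
    (ht : x + t • y ∈ Ω) :
    d x (x + t • y) - d x (x + s • y) = d (x + s • y) (x + t • y) := by
  linarith [h x hx _ ht _ (add_smul_mem_segment hs hst x y)]

end IsAdditiveOnSegments

/-- `F` is the infinitesimal metric of `d` on `Ω`: `F x y` is the one-sided directional derivative
of `d x` at `x` in the direction `y`. -/
def HasInfinitesimalMetric (Ω : Set E) (d F : E → E → ℝ) : Prop :=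
  ∀ x ∈ Ω, ∀ y, Tendsto (fun t : ℝ => d x (x + t • y) / t) (𝓝[>] 0) (𝓝 (F x y))

namespace HasInfinitesimalMetric

variable {Ω : Set E} {d F : E → E → ℝ} {x y : E}

theorem mono (h : HasInfinitesimalMetric Ω d F) {B : Set E} (hB : B ⊆ Ω) :
    HasInfinitesimalMetric B d F :=
  fun x hx => h x (hB hx)

theorem isPosHomogeneous (h : HasInfinitesimalMetric Ω d F) (hx : x ∈ Ω) :
    IsPosHomogeneous (F x) := by
  intro α hα y
  have hscale : Tendsto (fun t : ℝ => t * α) (𝓝[>] 0) (𝓝[>] 0) := by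
    refine tendsto_nhdsWithin_iff.2 ⟨?_, ?_⟩
    · exact (Continuous.tendsto' (by fun_prop) 0 0 (zero_mul α)).mono_left nhdsWithin_le_nhds
    · filter_upwards [self_mem_nhdsWithin] with t ht using mul_pos ht hα
  refine tendsto_nhds_unique (h x hx (α • y)) ((((h x hx y).comp hscale).const_mul α).congr' ?_)
  filter_upwards [self_mem_nhdsWithin] with t (ht : 0 < t)
  simp only [Function.comp_apply, smul_smul]
  field_simp

theorem hasDerivWithinAt (h : HasInfinitesimalMetric Ω d F) (hΩ : Convex ℝ Ω)
    (hadd : IsAdditiveOnSegments Ω d) (hx : x ∈ Ω) {s T : ℝ} (hs : 0 ≤ s) (hsT : s < T)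
    (hT : x + T • y ∈ Ω) :
    HasDerivWithinAt (fun t : ℝ => d x (x + t • y)) (F (x + s • y) y) (Ioi s) s := by
  have hmem : ∀ t, 0 ≤ t → t ≤ T → x + t • y ∈ Ω := fun t ht htT =>
    hΩ.segment_subset hx hT (add_smul_mem_segment ht htT x y)
  rw [hasDerivWithinAt_iff_tendsto_slope' self_notMem_Ioi]
  refine ((h _ (hmem s hs hsT.le) y).comp (tendsto_sub_right_nhdsGT_self s)).congr' ?_
  filter_upwards [Ioo_mem_nhdsGT hsT] with t ht
  have hpoint : x + s • y + (t - s) • y = x + t • y := by module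
  rw [Function.comp_apply, hpoint, slope_def_field,
    hadd.add_smul_sub hx hs ht.1.le (hmem t (hs.trans ht.1.le) ht.2.le)]

end HasInfinitesimalMetric

variable {Ω : Set E} {d F : E → E → ℝ} {x y : E}

theorem intervalIntegrable_segment (hΩ : Convex ℝ Ω)
    (hF : ContinuousOn (fun p : E × E => F p.1 p.2) (Ω ×ˢ univ)) (hx : x ∈ Ω) (hy : x + y ∈ Ω) :
    IntervalIntegrable (fun t : ℝ => F (x + t • y) y) volume 0 1 := by
  refine ContinuousOn.intervalIntegrable_of_Icc zero_le_one ?_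
  exact hF.comp (f := fun t : ℝ => (x + t • y, y)) (by fun_prop)
    fun t ht => ⟨hΩ.add_smul_mem hx hy ht, mem_univ _⟩

theorem HasInfinitesimalMetric.integral_segment_eq (h : HasInfinitesimalMetric Ω d F)
    (hΩ : Convex ℝ Ω) (hadd : IsAdditiveOnSegments Ω d)
    (hF : ContinuousOn (fun p : E × E => F p.1 p.2) (Ω ×ˢ univ)) (hd : ContinuousOn (d x) Ω)
    (hx : x ∈ Ω) (hy : x + y ∈ Ω) :
    ∫ t in (0 : ℝ)..1, F (x + t • y) y = d x (x + y) := by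
  have hcont : ContinuousOn (fun t : ℝ => d x (x + t • y)) (Icc 0 1) :=
    hd.comp (by fun_prop) fun t ht => hΩ.add_smul_mem hx hy ht
  rw [intervalIntegral.integral_eq_sub_of_hasDeriv_right_of_le zero_le_one hcont
    (fun s hs => h.hasDerivWithinAt hΩ hadd hx hs.1.le hs.2 (by rwa [one_smul]))
    (intervalIntegrable_segment hΩ hF hx hy)]
  rw [one_smul, zero_smul, add_zero, hadd.self_eq_zero hx, sub_zero]

end Segments

section LocalEstimates

variable {E : Type*} [NormedAddCommGroup E]

/-- The estimates of condition (B) on a set `B`: `d` is comparable to the Euclidean distance and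
the `d`-length of a displacement `y` depends in a Lipschitz way on its base point. -/
def MetricEstimatesOn (d : E → E → ℝ) (B : Set E) (c C : ℝ) : Prop :=
  ∀ x₁ ∈ B, ∀ x₂ ∈ B, (c * ‖x₂ - x₁‖ ≤ d x₁ x₂ ∧ d x₁ x₂ ≤ C * ‖x₂ - x₁‖) ∧
    ∀ y, x₁ + y ∈ B → x₂ + y ∈ B → |d x₁ (x₁ + y) - d x₂ (x₂ + y)| ≤ C * ‖y‖ * ‖x₂ - x₁‖

/-- The infinitesimal counterpart of `MetricEstimatesOn`. -/
def PseudoNormEstimatesOn (F : E → E → ℝ) (B : Set E) (c C : ℝ) : Prop :=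
  (∀ z ∈ B, ∀ v, c * ‖v‖ ≤ F z v ∧ F z v ≤ C * ‖v‖) ∧
    ∀ z₁ ∈ B, ∀ z₂ ∈ B, ∀ v, |F z₁ v - F z₂ v| ≤ C * ‖v‖ * ‖z₁ - z₂‖

/-- Condition (B) of the theorem. -/
def HasLocalMetricEstimates (Ω : Set E) (d : E → E → ℝ) : Prop :=
  ∀ x ∈ Ω, ∃ r : ℝ, 0 < r ∧ ∃ c : ℝ, 0 < c ∧ ∃ C : ℝ, 0 < C ∧
    Metric.ball x r ⊆ Ω ∧ MetricEstimatesOn d (Metric.ball x r) c C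

variable {B : Set E} {d F : E → E → ℝ} {c C : ℝ}

namespace PseudoNormEstimatesOn

variable {x : E}

theorem abs_sub_le (h : PseudoNormEstimatesOn F B c C) (hx : x ∈ B)
    (hadd : ∀ y₁ y₂, F x (y₁ + y₂) ≤ F x y₁ + F x y₂) (u v : E) :
    |F x u - F x v| ≤ C * ‖u - v‖ := by
  have hone : ∀ u v : E, F x u - F x v ≤ C * ‖u - v‖ := fun u v => by
    have huv := hadd v (u - v)
    rw [add_sub_cancel] at huv
    linarith [(h.1 x hx (u - v)).2]
  exact abs_sub_le_iff.2 ⟨hone u v, norm_sub_rev u v ▸ hone v u⟩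

theorem continuousAt (h : PseudoNormEstimatesOn F B c C) (hB : B ∈ 𝓝 x)
    (hadd : ∀ y₁ y₂, F x (y₁ + y₂) ≤ F x y₁ + F x y₂) (y : E) :
    ContinuousAt (fun p : E × E => F p.1 p.2) (x, y) := by
  have hbound : Tendsto (fun p : E × E => C * ‖p.2‖ * ‖p.1 - x‖ + C * ‖p.2 - y‖)
      (𝓝 (x, y)) (𝓝 0) := Continuous.tendsto' (by fun_prop) _ _ (by simp)
  rw [ContinuousAt, tendsto_iff_dist_tendsto_zero]
  refine squeeze_zero' (Eventually.of_forall fun _ => dist_nonneg) ?_ hbound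
  filter_upwards [continuousAt_fst.eventually_mem hB] with p hp
  calc dist (F p.1 p.2) (F x y) ≤ dist (F p.1 p.2) (F x p.2) + dist (F x p.2) (F x y) :=
        dist_triangle _ _ _
    _ ≤ C * ‖p.2‖ * ‖p.1 - x‖ + C * ‖p.2 - y‖ :=
        add_le_add (h.2 _ hp _ (mem_of_mem_nhds hB) _)
          (h.abs_sub_le (mem_of_mem_nhds hB) hadd _ _)

end PseudoNormEstimatesOn

variable [NormedSpace ℝ E]

theorem PseudoNormEstimatesOn.metricEstimatesOn (hFB : PseudoNormEstimatesOn F B c C)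
    (hdF : HasInfinitesimalMetric B d F) (hB : Convex ℝ B) (hadd : IsAdditiveOnSegments B d)
    (hF : ContinuousOn (fun p : E × E => F p.1 p.2) (B ×ˢ univ))
    (hd : ∀ x ∈ B, ContinuousOn (d x) B) : MetricEstimatesOn d B c C := by
  have hint : ∀ {x y : E}, x ∈ B → x + y ∈ B →
      IntervalIntegrable (fun t : ℝ => F (x + t • y) y) volume 0 1 :=
    fun hx hy => intervalIntegrable_segment hB hF hx hy
  have heq : ∀ {x y : E}, x ∈ B → x + y ∈ B →
      d x (x + y) = ∫ t in (0 : ℝ)..1, F (x + t • y) y :=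
    fun hx hy => (hdF.integral_segment_eq hB hadd hF (hd _ hx) hx hy).symm
  intro x₁ h₁ x₂ h₂
  refine ⟨?_, fun y h₁y h₂y => ?_⟩
  · obtain ⟨y, rfl⟩ : ∃ y, x₂ = x₁ + y := ⟨x₂ - x₁, (add_sub_cancel x₁ x₂).symm⟩
    have hbounds : ∀ t ∈ Icc (0 : ℝ) 1, c * ‖y‖ ≤ F (x₁ + t • y) y ∧ F (x₁ + t • y) y ≤ C * ‖y‖ :=
      fun t ht => hFB.1 _ (hB.add_smul_mem h₁ h₂ ht) y
    rw [heq h₁ h₂, add_sub_cancel_left]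
    constructor
    · simpa using intervalIntegral.integral_mono_on zero_le_one intervalIntegrable_const
        (hint h₁ h₂) fun t ht => (hbounds t ht).1
    · simpa using intervalIntegral.integral_mono_on zero_le_one (hint h₁ h₂)
        intervalIntegrable_const fun t ht => (hbounds t ht).2
  · have hlip : ∀ t ∈ uIoc (0 : ℝ) 1,
        ‖F (x₁ + t • y) y - F (x₂ + t • y) y‖ ≤ C * ‖y‖ * ‖x₂ - x₁‖ := by
      intro t ht
      rw [uIoc_of_le zero_le_one] at ht
      have ht' := Ioc_subset_Icc_self ht
      have h := hFB.2 _ (hB.add_smul_mem h₁ h₁y ht') _ (hB.add_smul_mem h₂ h₂y ht') y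
      rwa [add_sub_add_right_eq_sub, norm_sub_rev] at h
    rw [heq h₁ h₁y, heq h₂ h₂y, ← intervalIntegral.integral_sub (hint h₁ h₁y) (hint h₂ h₂y)]
    simpa using intervalIntegral.norm_integral_le_of_norm_le_const hlip

namespace MetricEstimatesOn

variable {x : E}

theorem lower_smul (h : MetricEstimatesOn d B c C) (hx : x ∈ B) {t : ℝ} (ht : 0 < t) {y : E}
    (hy : x + t • y ∈ B) : c * ‖y‖ ≤ d x (x + t • y) / t := by
  have hxy := (h x hx _ hy).1.1
  rw [add_sub_cancel_left, norm_smul_of_nonneg ht.le] at hxy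
  rw [le_div_iff₀ ht]
  linarith

theorem upper_smul (h : MetricEstimatesOn d B c C) (hx : x ∈ B) {t : ℝ} (ht : 0 < t) {y : E}
    (hy : x + t • y ∈ B) : d x (x + t • y) / t ≤ C * ‖y‖ := by
  have hxy := (h x hx _ hy).1.2
  rw [add_sub_cancel_left, norm_smul_of_nonneg ht.le] at hxy
  rw [div_le_iff₀ ht]
  linarith

theorem lipschitz_smul (h : MetricEstimatesOn d B c C) {x₁ x₂ y : E} (h₁ : x₁ ∈ B) (h₂ : x₂ ∈ B)
    {t : ℝ} (ht : 0 < t) (h₁y : x₁ + t • y ∈ B) (h₂y : x₂ + t • y ∈ B) :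
    |d x₁ (x₁ + t • y) / t - d x₂ (x₂ + t • y) / t| ≤ C * ‖y‖ * ‖x₁ - x₂‖ := by
  have h₁₂ := (h x₁ h₁ x₂ h₂).2 (t • y) h₁y h₂y
  rw [norm_smul_of_nonneg ht.le, norm_sub_rev] at h₁₂
  rw [← sub_div, abs_div, abs_of_pos ht, div_le_iff₀ ht]
  linarith

theorem pseudoNormEstimatesOn (h : MetricEstimatesOn d B c C) (hB : IsOpen B)
    (hdF : HasInfinitesimalMetric B d F) : PseudoNormEstimatesOn F B c C := by
  have hpos : ∀ᶠ t : ℝ in 𝓝[>] 0, 0 < t := self_mem_nhdsWithin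
  refine ⟨fun z hz v => ⟨?_, ?_⟩, fun z₁ h₁ z₂ h₂ v => ?_⟩
  · refine ge_of_tendsto (hdF z hz v) ?_
    filter_upwards [eventually_add_smul_mem hB hz v, hpos] with t ht ht0
    exact h.lower_smul hz ht0 ht
  · refine le_of_tendsto (hdF z hz v) ?_
    filter_upwards [eventually_add_smul_mem hB hz v, hpos] with t ht ht0
    exact h.upper_smul hz ht0 ht
  · refine le_of_tendsto ((hdF z₁ h₁ v).sub (hdF z₂ h₂ v)).abs ?_
    filter_upwards [eventually_add_smul_mem hB h₁ v, eventually_add_smul_mem hB h₂ v, hpos]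
      with t ht₁ ht₂ ht0
    exact h.lipschitz_smul h₁ h₂ ht0 ht₁ ht₂

theorem abs_sub_sub_le (h : MetricEstimatesOn d B c C) (hadd : IsAdditiveOnSegments B d)
    (hx : x ∈ B) {y : E} {s u : ℝ} (hs : 0 < s) (hu : 0 < u) (hxs : x + s • y ∈ B)
    (hxu : x + u • y ∈ B) (hxsu : x + (s + u) • y ∈ B) :
    |d x (x + (s + u) • y) - d x (x + s • y) - d x (x + u • y)| ≤ C * ‖y‖ * ‖y‖ * s * u := by
  have hpoint : x + (s + u) • y = x + s • y + u • y := by module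
  rw [hadd.add_smul_sub hx hs.le (le_add_of_nonneg_right hu.le) hxsu, hpoint]
  calc |d (x + s • y) (x + s • y + u • y) - d x (x + u • y)|
      ≤ C * ‖u • y‖ * ‖x - (x + s • y)‖ := (h _ hxs x hx).2 (u • y) (hpoint ▸ hxsu) hxu
    _ = C * ‖y‖ * ‖y‖ * s * u := by
      rw [norm_sub_rev, add_sub_cancel_left, norm_smul_of_nonneg hs.le, norm_smul_of_nonneg hu.le]
      ring

theorem exists_tendsto_div (h : MetricEstimatesOn d B c C) (hc : 0 ≤ c) (hB : IsOpen B)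
    (hadd : IsAdditiveOnSegments B d) (hx : x ∈ B) (y : E) :
    ∃ l, Tendsto (fun t : ℝ => d x (x + t • y) / t) (𝓝[>] 0) (𝓝 l) := by
  obtain ⟨T, hT, hmem⟩ :=
    mem_nhdsGT_iff_exists_Ioo_subset.1 (eventually_add_smul_mem hB hx y)
  refine exists_tendsto_div_of_abs_sub_sub_le hT (fun s hs t ht hst => ?_)
    fun s hs u hu hsu => h.abs_sub_sub_le hadd hx hs hu (hmem ⟨hs, by linarith⟩)
      (hmem ⟨hu, by linarith⟩) (hmem ⟨by linarith, hsu⟩)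
  have hnonneg : 0 ≤ d (x + s • y) (x + t • y) :=
    (mul_nonneg hc (norm_nonneg _)).trans (h _ (hmem hs) _ (hmem ht)).1.1
  linarith [hadd.add_smul_sub hx hs.1.le hst (hmem ht)]

end MetricEstimatesOn

theorem HasLocalMetricEstimates.exists_hasInfinitesimalMetric {Ω : Set E}
    (h : HasLocalMetricEstimates Ω d) (hadd : IsAdditiveOnSegments Ω d) :
    ∃ F, HasInfinitesimalMetric Ω d F := by
  refine ⟨fun x y => limUnder (𝓝[>] 0) fun t : ℝ => d x (x + t • y) / t,
    fun x hx y => tendsto_nhds_limUnder ?_⟩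
  obtain ⟨r, hr, c, hc, C, -, hBΩ, hest⟩ := h x hx
  exact hest.exists_tendsto_div hc.le Metric.isOpen_ball (hadd.mono hBΩ) (Metric.mem_ball_self hr) y

theorem HasInfinitesimalMetric.exists_pseudoNormEstimatesOn_ball {Ω : Set E}
    (hdF : HasInfinitesimalMetric Ω d F) (hB : HasLocalMetricEstimates Ω d) {x : E} (hx : x ∈ Ω) :
    ∃ r > 0, ∃ c > 0, ∃ C > 0,
      Metric.ball x r ⊆ Ω ∧ PseudoNormEstimatesOn F (Metric.ball x r) c C := by
  obtain ⟨r, hr, c, hc, C, hC, hBΩ, hest⟩ := hB x hx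
  exact ⟨r, hr, c, hc, C, hC, hBΩ,
    hest.pseudoNormEstimatesOn Metric.isOpen_ball (hdF.mono hBΩ)⟩

theorem HasInfinitesimalMetric.subadditive (hdF : HasInfinitesimalMetric B d F) (hB : IsOpen B)
    (htri : ∀ x₁ ∈ B, ∀ x₂ ∈ B, ∀ x₃ ∈ B, d x₁ x₃ ≤ d x₁ x₂ + d x₂ x₃)
    (h : MetricEstimatesOn d B c C) {x : E} (hx : x ∈ B) (y₁ y₂ : E) :
    F x (y₁ + y₂) ≤ F x y₁ + F x y₂ := by
  have herr : Tendsto (fun t : ℝ => C * ‖y₂‖ * ‖t • y₁‖) (𝓝[>] 0) (𝓝 0) :=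
    (Continuous.tendsto' (by fun_prop) 0 0 (by simp)).mono_left nhdsWithin_le_nhds
  have hlim := ((hdF x hx y₁).add (hdF x hx y₂)).add herr
  rw [add_zero] at hlim
  refine le_of_tendsto_of_tendsto (hdF x hx (y₁ + y₂)) hlim ?_
  filter_upwards [eventually_add_smul_mem hB hx y₁, eventually_add_smul_mem hB hx y₂,
    eventually_add_smul_mem hB hx (y₁ + y₂), self_mem_nhdsWithin] with t h₁ h₂ h₁₂ (ht : 0 < t)
  have hpoint : x + t • (y₁ + y₂) = x + t • y₁ + t • y₂ := by module
  have htransport := h.lipschitz_smul h₁ hx ht (hpoint ▸ h₁₂) h₂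
  rw [add_sub_cancel_left, ← hpoint] at htransport
  have htriangle : d x (x + t • (y₁ + y₂)) / t ≤
      d x (x + t • y₁) / t + d (x + t • y₁) (x + t • (y₁ + y₂)) / t := by
    rw [← add_div]
    gcongr
    exact htri x hx _ h₁ _ h₁₂
  linarith [(abs_le.1 htransport).2]

theorem HasInfinitesimalMetric.hadamardDerivLE {Ω : Set E} (hdF : HasInfinitesimalMetric Ω d F)
    (htri : ∀ x₁ ∈ Ω, ∀ x₂ ∈ Ω, ∀ x₃ ∈ Ω, d x₁ x₃ ≤ d x₁ x₂ + d x₂ x₃)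
    (hB : IsOpen B) (hBΩ : B ⊆ Ω) (h : MetricEstimatesOn d B c C) {x z : E} (hx : x ∈ Ω)
    (hz : z ∈ B) (v : E) : HadamardDerivLE (d x) z v (F z v) := by
  intro r hr
  obtain ⟨q, hFq, hqr⟩ := exists_between hr
  have hle : 𝓝[>] (0 : ℝ) ×ˢ 𝓝 v ≤ 𝓝 (0, v) := by
    rw [nhds_prod_eq]
    exact Filter.prod_mono nhdsWithin_le_nhds le_rfl
  have hmove : ∀ᶠ p : ℝ × E in 𝓝[>] 0 ×ˢ 𝓝 v, z + p.1 • p.2 ∈ B := by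
    have hcont : ContinuousAt (fun p : ℝ × E => z + p.1 • p.2) (0, v) := by fun_prop
    exact (hcont.eventually_mem (by simpa using hB.mem_nhds hz)).filter_mono hle
  have herr : ∀ᶠ p : ℝ × E in 𝓝[>] 0 ×ˢ 𝓝 v, C * ‖p.2 - v‖ < r - q := by
    have hcont : ContinuousAt (fun p : ℝ × E => C * ‖p.2 - v‖) (0, v) := by fun_prop
    exact (hcont.eventually_lt_const (by simpa using hqr)).filter_mono hle
  filter_upwards [hmove, herr,
    tendsto_fst.eventually (eventually_add_smul_mem hB hz v),
    tendsto_fst.eventually ((hdF z (hBΩ hz) v).eventually_lt_const hFq),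
    eventually_fst_pos_nhdsGT_zero_prod (𝓝 v)] with p hp hperr hpv hpq hp0
  have htriangle := htri x hx z (hBΩ hz) _ (hBΩ hp)
  have htriangle' := htri z (hBΩ hz) _ (hBΩ hpv) _ (hBΩ hp)
  have hupper := (h _ hpv _ hp).1.2
  rw [add_sub_add_left_eq_sub, ← smul_sub, norm_smul_of_nonneg hp0.le] at hupper
  rw [div_lt_iff₀ hp0] at hpq
  linarith [mul_lt_mul_of_pos_left hperr hp0]

end LocalEstimates

section Smoothness

theorem isOpen_offDiag {X : Type*} [TopologicalSpace X] [T2Space X] {Ω : Set X} (hΩ : IsOpen Ω) :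
    IsOpen Ω.offDiag :=
  (hΩ.preimage continuous_fst).inter
    ((hΩ.preimage continuous_snd).inter (isOpen_ne_fun continuous_fst continuous_snd))

variable {E : Type*} [NormedAddCommGroup E] [NormedSpace ℝ E] {Ω : Set E} {d F : E → E → ℝ}

namespace HasInfinitesimalMetric

theorem contDiffOn_offDiag (hdF : HasInfinitesimalMetric Ω d F) (hΩ : IsOpen Ω)
    (hΩconv : Convex ℝ Ω) (hadd : IsAdditiveOnSegments Ω d) (hd : ∀ x ∈ Ω, ContinuousOn (d x) Ω)
    (hFcont : ContinuousOn (fun p : E × E => F p.1 p.2) (Ω ×ˢ univ))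
    (hF : ContDiffOn ℝ (⊤ : ℕ∞) (fun p : E × E => F p.1 p.2) (Ω ×ˢ {y | y ≠ 0})) :
    ContDiffOn ℝ (⊤ : ℕ∞) (fun p : E × E => d p.1 p.2) Ω.offDiag := by
  let Φ : (E × E) × ℝ → E × E := fun q => (q.1.1 + q.2 • (q.1.2 - q.1.1), q.1.2 - q.1.1)
  have hΦ : ContDiff ℝ (⊤ : ℕ∞) Φ := by fun_prop
  have hopen : IsOpen (Φ ⁻¹' (Ω ×ˢ {y | y ≠ 0})) := (hΩ.prod isOpen_ne).preimage hΦ.continuous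
  have hend : ∀ p ∈ Ω.offDiag, p.1 + (p.2 - p.1) ∈ Ω := fun p hp => by
    rw [add_sub_cancel]
    exact hp.2.1
  have hmaps : ∀ p ∈ Ω.offDiag, ∀ t ∈ uIcc (0 : ℝ) 1, (p, t) ∈ Φ ⁻¹' (Ω ×ˢ {y | y ≠ 0}) :=
    fun p hp t ht => ⟨hΩconv.add_smul_mem hp.1 (hend p hp) (uIcc_of_le (zero_le_one' ℝ) ▸ ht),
      sub_ne_zero.2 hp.2.2.symm⟩
  have hcomp : ContDiffOn ℝ (⊤ : ℕ∞) (fun q => F (Φ q).1 (Φ q).2) (Φ ⁻¹' (Ω ×ˢ {y | y ≠ 0})) :=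
    hF.comp hΦ.contDiffOn fun _ hq => hq
  refine (contDiffOn_integral_of_contDiffOn hopen (isOpen_offDiag hΩ) hmaps hcomp).congr
    fun p hp => ?_
  have hseg := hdF.integral_segment_eq hΩconv hadd hFcont (hd p.1 hp.1) hp.1 (hend p hp)
  rw [add_sub_cancel] at hseg
  exact hseg.symm

theorem fderiv_apply_eq (hdF : HasInfinitesimalMetric Ω d F) (hΩ : IsOpen Ω)
    (hΩconv : Convex ℝ Ω) (hadd : IsAdditiveOnSegments Ω d) {x y : E} {τ : ℝ} (hτ : 0 ≤ τ)
    (hx : x ∈ Ω) (hxτ : x + τ • y ∈ Ω)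
    (hd : DifferentiableAt ℝ (fun p : E × E => d p.1 p.2) (x, x + τ • y)) :
    fderiv ℝ (fun p : E × E => d p.1 p.2) (x, x + τ • y) (0, y) = F (x + τ • y) y := by
  obtain ⟨η, hη, hη0⟩ := ((eventually_add_smul_mem hΩ hxτ y).and self_mem_nhdsWithin).exists
  have hright : HasDerivWithinAt (fun t : ℝ => d x (x + t • y)) (F (x + τ • y) y) (Ioi τ) τ :=
    hdF.hasDerivWithinAt hΩconv hadd hx hτ (lt_add_of_pos_right τ hη0)
      (by rwa [add_smul, ← add_assoc])
  have hcurve : HasDerivAt (fun t : ℝ => (x, x + t • y)) ((0 : E), y) τ :=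
    (hasDerivAt_const τ x).prodMk (hasDerivAt_add_smul x y τ)
  have hchain : HasDerivAt (fun t : ℝ => d x (x + t • y))
      (fderiv ℝ (fun p : E × E => d p.1 p.2) (x, x + τ • y) (0, y)) τ :=
    HasFDerivAt.comp_hasDerivAt (l := fun p : E × E => d p.1 p.2) τ hd.hasFDerivAt hcurve
  exact (uniqueDiffWithinAt_Ioi τ).eq_deriv _ hchain.hasDerivWithinAt hright

-- `F x y` is the derivative of `d (x - τ • y)` at `x` along `y`, and `(x - τ • y, x)` stays away
-- from the diagonal, where `d` is not smooth.
theorem contDiffOn_of_contDiffOn_offDiag (hdF : HasInfinitesimalMetric Ω d F) (hΩ : IsOpen Ω)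
    (hΩconv : Convex ℝ Ω) (hadd : IsAdditiveOnSegments Ω d)
    (hd : ContDiffOn ℝ (⊤ : ℕ∞) (fun p : E × E => d p.1 p.2) Ω.offDiag) :
    ContDiffOn ℝ (⊤ : ℕ∞) (fun p : E × E => F p.1 p.2) (Ω ×ˢ {y | y ≠ 0}) := by
  rintro ⟨x₀, y₀⟩ ⟨hx₀, hy₀⟩
  have hU : IsOpen Ω.offDiag := isOpen_offDiag hΩ
  obtain ⟨τ, hτ, hτ0 : 0 < τ⟩ :=
    ((eventually_add_smul_mem hΩ hx₀ (-y₀)).and self_mem_nhdsWithin).exists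
  let Φ : E × E → E × E := fun p => (p.1 - τ • p.2, p.1)
  have hΦ : ContDiff ℝ (⊤ : ℕ∞) Φ := by fun_prop
  have hbase : (x₀, y₀) ∈ Φ ⁻¹' Ω.offDiag := by
    refine ⟨?_, hx₀, ?_⟩
    · rwa [smul_neg, ← sub_eq_add_neg] at hτ
    · simpa [Φ, hτ0.ne'] using hy₀
  have hfderiv : ContDiffOn ℝ (⊤ : ℕ∞)
      (fun p : E × E => fderiv ℝ (fun p : E × E => d p.1 p.2) (Φ p) (0, p.2)) (Φ ⁻¹' Ω.offDiag) :=
    (((contDiffOn_infty_iff_fderiv_of_isOpen hU).1 hd).2.comp hΦ.contDiffOn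
      fun _ hq => hq).clm_apply (by fun_prop)
  refine ((hfderiv.congr fun p hp => ?_).contDiffAt
    ((hU.preimage hΦ.continuous).mem_nhds hbase)).contDiffWithinAt
  have hdiff : DifferentiableAt ℝ (fun p : E × E => d p.1 p.2) (Φ p) :=
    (hd.differentiableOn (by simp)).differentiableAt (hU.mem_nhds hp)
  have hpoint : p.1 - τ • p.2 + τ • p.2 = p.1 := sub_add_cancel _ _
  have h := hdF.fderiv_apply_eq hΩ hΩconv hadd (x := p.1 - τ • p.2) (y := p.2) hτ0.le hp.1
    (by rw [hpoint]; exact hp.2.1) (by rw [hpoint]; exact hdiff)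
  rw [hpoint] at h
  exact h.symm

end HasInfinitesimalMetric

end Smoothness

section InducedMetric

variable {n : ℕ} {Ω : Set (EuclideanSpace ℝ (Fin n))}
  {d F : EuclideanSpace ℝ (Fin n) → EuclideanSpace ℝ (Fin n) → ℝ}
  {x y : EuclideanSpace ℝ (Fin n)}

theorem IsAsymmetricMetric.continuousOn_right (hd : IsAsymmetricMetric n Ω d) (hx : x ∈ Ω) :
    ContinuousOn (d x) Ω :=
  hd.1.comp (f := fun z => (x, z)) (by fun_prop) fun _ hz => ⟨hx, hz⟩

theorem ofReal_add_ofReal_le_dLength (d : EuclideanSpace ℝ (Fin n) → EuclideanSpace ℝ (Fin n) → ℝ)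
    (γ : ℝ → EuclideanSpace ℝ (Fin n)) {t : ℝ} (ht : t ∈ Ioo (0 : ℝ) 1) :
    ENNReal.ofReal (d (γ 0) (γ t)) + ENNReal.ofReal (d (γ t) (γ 1)) ≤ dLength n d γ := by
  refine le_sSup ⟨2, ![0, t, 1], ?_, rfl, rfl, ?_⟩
  · rw [Fin.strictMono_iff_lt_succ, Fin.forall_fin_two]
    exact ht
  · rw [Fin.sum_univ_two]
    rfl

theorem IsProjFlatMetric.isAdditiveOnSegments (hpf : IsProjFlatMetric n Ω d)
    (hd : IsAsymmetricMetric n Ω d) (hΩ : Convex ℝ Ω) : IsAdditiveOnSegments Ω d := by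
  intro x hx z hz w hw
  have hwΩ : w ∈ Ω := hΩ.segment_subset hx hz hw
  refine le_antisymm ?_ (hd.2.2 x hx w hwΩ z hz)
  rcases eq_or_ne w x with rfl | hwx
  · rw [(hd.2.1 w hx w hx).2.2 rfl, zero_add]
  rcases eq_or_ne w z with rfl | hwz
  · rw [(hd.2.1 w hz w hz).2.2 rfl, add_zero]
  rw [segment_eq_image] at hw
  obtain ⟨t, ht, rfl⟩ := hw
  have ht0 : t ≠ 0 := by
    rintro rfl
    simp at hwx
  have ht1 : t ≠ 1 := by
    rintro rfl
    simp at hwz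
  have hlen := ofReal_add_ofReal_le_dLength d (fun t : ℝ => (1 - t) • x + t • z)
    ⟨ht.1.lt_of_ne' ht0, ht.2.lt_of_ne ht1⟩
  rw [← hpf x hx z hz, ← ENNReal.ofReal_add (hd.2.1 _ (by simpa) _ hwΩ).1
    (hd.2.1 _ hwΩ _ (by simpa)).1, ENNReal.ofReal_le_ofReal_iff (hd.2.1 x hx z hz).1] at hlen
  simpa using hlen

theorem piecewiseC1_add_smul (x y : EuclideanSpace ℝ (Fin n)) :
    PiecewiseC1 n fun t : ℝ => x + t • y := by
  refine ⟨1, fun i => (i : ℕ), fun i j hij => ?_, by simp, by simp,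
    fun _ => ContDiff.contDiffOn (by fun_prop)⟩
  exact Nat.cast_lt.2 hij

theorem PiecewiseC1.sub_le_integral {γ : ℝ → EuclideanSpace ℝ (Fin n)} (hγ : PiecewiseC1 n γ)
    (hγΩ : ∀ t ∈ Icc (0 : ℝ) 1, γ t ∈ Ω)
    (hF : ContinuousOn (fun p : _ × _ => F p.1 p.2) (Ω ×ˢ univ))
    {P : EuclideanSpace ℝ (Fin n) → ℝ} (hP : ContinuousOn P Ω)
    (hPF : ∀ z ∈ Ω, ∀ v, HadamardDerivLE P z v (F z v)) :
    P (γ 1) - P (γ 0) ≤ ∫ t in (0 : ℝ)..1, F (γ t) (deriv γ t) := by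
  obtain ⟨k, s, hs, hs0, hs1, hγs⟩ := hγ
  have hsI : ∀ i, s i ∈ Icc (0 : ℝ) 1 := fun i =>
    ⟨hs0 ▸ hs.monotone (Fin.zero_le i), hs1 ▸ hs.monotone (Fin.le_last i)⟩
  have hinit : ∀ i : Fin (k + 1),
      IntervalIntegrable (fun t => F (γ t) (deriv γ t)) volume 0 (s i) ∧
        P (γ (s i)) - P (γ 0) ≤ ∫ t in (0 : ℝ)..s i, F (γ t) (deriv γ t) := by
    intro i
    induction i using Fin.induction with
    | zero => simp [hs0]
    | succ i ih =>
      have hlt : s i.castSucc < s i.succ := hs Fin.castSucc_lt_succ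
      have hmaps : MapsTo γ (Icc (s i.castSucc) (s i.succ)) Ω := fun t ht =>
        hγΩ t ⟨(hsI _).1.trans ht.1, ht.2.trans (hsI _).2⟩
      have hint := intervalIntegrable_comp_deriv hF hlt (hγs i) hmaps
      refine ⟨ih.1.trans hint, ?_⟩
      rw [← intervalIntegral.integral_add_adjacent_intervals ih.1 hint]
      linarith [ih.2, sub_le_integral_of_hadamardDerivLE hF hP hPF hlt (hγs i) hmaps]
  simpa only [hs1] using (hinit (Fin.last k)).2

/-- The `F`-lengths of the piecewise `C¹` curves in `Ω` from `x₁` to `x₂`, whose infimum is the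
distance induced by `F`. -/
def curveIntegrals (Ω : Set (EuclideanSpace ℝ (Fin n)))
    (F : EuclideanSpace ℝ (Fin n) → EuclideanSpace ℝ (Fin n) → ℝ)
    (x₁ x₂ : EuclideanSpace ℝ (Fin n)) : Set ℝ :=
  {L : ℝ | ∃ γ : ℝ → EuclideanSpace ℝ (Fin n), PiecewiseC1 n γ ∧
    (∀ t ∈ Icc (0 : ℝ) 1, γ t ∈ Ω) ∧ γ 0 = x₁ ∧ γ 1 = x₂ ∧
    L = ∫ t in (0 : ℝ)..1, F (γ t) (deriv γ t)}

theorem integral_segment_mem_curveIntegrals (hΩ : Convex ℝ Ω) (hx : x ∈ Ω) (hy : x + y ∈ Ω)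
    (F : EuclideanSpace ℝ (Fin n) → EuclideanSpace ℝ (Fin n) → ℝ) :
    ∫ t in (0 : ℝ)..1, F (x + t • y) y ∈ curveIntegrals Ω F x (x + y) :=
  ⟨fun t => x + t • y, piecewiseC1_add_smul x y, fun _ ht => hΩ.add_smul_mem hx hy ht,
    by simp, by simp, by simp only [(hasDerivAt_add_smul x y _).deriv]⟩

theorem sub_mem_lowerBounds_curveIntegrals {x₁ x₂ : EuclideanSpace ℝ (Fin n)}
    (hF : ContinuousOn (fun p : _ × _ => F p.1 p.2) (Ω ×ˢ univ))
    {P : EuclideanSpace ℝ (Fin n) → ℝ} (hP : ContinuousOn P Ω)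
    (hPF : ∀ z ∈ Ω, ∀ v, HadamardDerivLE P z v (F z v)) :
    P x₂ - P x₁ ∈ lowerBounds (curveIntegrals Ω F x₁ x₂) := by
  rintro L ⟨γ, hγ, hγΩ, rfl, rfl, rfl⟩
  exact hγ.sub_le_integral hγΩ hF hP hPF

namespace IsPseudoNormFunction

theorem isPosHomogeneous (hF : IsPseudoNormFunction n Ω F) (hx : x ∈ Ω) :
    IsPosHomogeneous (F x) :=
  (hF.2 x hx).2.1

theorem nonneg (hF : IsPseudoNormFunction n Ω F) (hx : x ∈ Ω) (y : EuclideanSpace ℝ (Fin n)) :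
    0 ≤ F x y :=
  ((hF.2 x hx).1 y).1

theorem pos_of_mem_sphere (hF : IsPseudoNormFunction n Ω F) (hx : x ∈ Ω)
    {u : EuclideanSpace ℝ (Fin n)} (hu : u ∈ Metric.sphere 0 1) : 0 < F x u :=
  (hF.nonneg hx u).lt_of_ne' fun h =>
    ne_zero_of_mem_unit_sphere ⟨u, hu⟩ (((hF.2 x hx).1 u).2.1 h)

theorem continuousAt (hF : IsPseudoNormFunction n Ω F) (hΩ : IsOpen Ω) (hx : x ∈ Ω)
    (y : EuclideanSpace ℝ (Fin n)) : ContinuousAt (fun p : _ × _ => F p.1 p.2) (x, y) :=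
  hF.1.continuousAt ((hΩ.prod isOpen_univ).mem_nhds ⟨hx, mem_univ y⟩)

theorem continuous_right (hF : IsPseudoNormFunction n Ω F) (hx : x ∈ Ω) : Continuous (F x) :=
  continuousOn_univ.1 <| hF.1.comp (f := fun v => (x, v)) (by fun_prop) fun v _ => ⟨hx, mem_univ v⟩

theorem eventually_isPosHomogeneous (hF : IsPseudoNormFunction n Ω F) (hΩ : IsOpen Ω)
    (hx : x ∈ Ω) : ∀ᶠ z in 𝓝 x, IsPosHomogeneous (F z) :=
  (hΩ.eventually_mem hx).mono fun _ hz => hF.isPosHomogeneous hz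

theorem exists_eventually_bounds (hF : IsPseudoNormFunction n Ω F) (hΩ : IsOpen Ω) (hx : x ∈ Ω) :
    ∃ c > 0, ∃ C > 0, ∀ᶠ z in 𝓝 x, ∀ v, c * ‖v‖ ≤ F z v ∧ F z v ≤ C * ‖v‖ := by
  have hcont : ContinuousOn (F x) (Metric.sphere 0 1) := (hF.continuous_right hx).continuousOn
  have hnorm (a : ℝ) : ∀ᶠ _ in 𝓝 x, IsPosHomogeneous fun v : EuclideanSpace ℝ (Fin n) => a * ‖v‖ :=
    Eventually.of_forall fun _ => IsPosHomogeneous.norm.const_mul a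
  obtain ⟨c, hc, hcF⟩ := (isCompact_sphere _ _).exists_forall_le' hcont
    fun u hu => hF.pos_of_mem_sphere hx hu
  obtain ⟨C, hC⟩ := (isCompact_sphere _ _).exists_bound_of_continuousOn hcont
  have hlower : ∀ᶠ z in 𝓝 x, ∀ v, c / 2 * ‖v‖ ≤ F z v := by
    refine IsPosHomogeneous.eventually_forall_le_of_lt_on_sphere
      (hnorm _) (hF.eventually_isPosHomogeneous hΩ hx) (fun u => by fun_prop)
      (hF.continuousAt hΩ hx) fun u hu => ?_
    rw [mem_sphere_zero_iff_norm.1 hu]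
    linarith [hcF u hu]
  have hupper : ∀ᶠ z in 𝓝 x, ∀ v, F z v ≤ (|C| + 1) * ‖v‖ := by
    refine IsPosHomogeneous.eventually_forall_le_of_lt_on_sphere
      (hF.eventually_isPosHomogeneous hΩ hx) (hnorm _) (hF.continuousAt hΩ hx)
      (fun u => by fun_prop) fun u hu => ?_
    rw [mem_sphere_zero_iff_norm.1 hu]
    linarith [le_abs_self C, (le_abs_self _).trans (hC u hu)]
  refine ⟨c / 2, half_pos hc, |C| + 1, by positivity, ?_⟩
  filter_upwards [hlower, hupper] with z hzl hzu v using ⟨hzl v, hzu v⟩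

theorem eventually_forall_mul_le (hF : IsPseudoNormFunction n Ω F) (hΩ : IsOpen Ω) (hx : x ∈ Ω)
    {a : ℝ} (ha : a < 1) : ∀ᶠ z in 𝓝 x, ∀ v, a * F x v ≤ F z v := by
  have hcont := hF.continuous_right hx
  refine IsPosHomogeneous.eventually_forall_le_of_lt_on_sphere (A := fun _ v => a * F x v)
    (Eventually.of_forall fun _ => (hF.isPosHomogeneous hx).const_mul a)
    (hF.eventually_isPosHomogeneous hΩ hx) (fun u => by fun_prop) (hF.continuousAt hΩ hx)
    fun u hu => ?_
  exact mul_lt_of_lt_one_left (hF.pos_of_mem_sphere hx hu) ha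

-- Near `x` the potential is dominated by subadditivity of `F x` and continuity of `F`, away from
-- `x` it is locally maximal because `F x (w - x) ≥ m`.
theorem exists_hadamardDerivLE_mul_min (hF : IsPseudoNormFunction n Ω F) (hΩ : IsOpen Ω)
    (hx : x ∈ Ω) {a : ℝ} (ha0 : 0 < a) (ha1 : a < 1) :
    ∃ m > 0, ∀ w ∈ Ω, ∀ v,
      HadamardDerivLE (fun z => a * min (F x (z - x)) m) w v (F w v) := by
  obtain ⟨c, hc, C, -, hbounds⟩ := hF.exists_eventually_bounds hΩ hx
  obtain ⟨δ, hδ, hnear⟩ := Metric.eventually_nhds_iff.1 (hF.eventually_forall_mul_le hΩ hx ha1)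
  refine ⟨c * δ, by positivity, fun w hw v => ?_⟩
  rcases lt_or_ge (dist w x) δ with hwx | hwx
  · have hderiv := (hF.isPosHomogeneous hx).hadamardDerivLE_comp_sub (hF.2 x hx).2.2
      (hF.continuous_right hx) x w v
    exact ((hderiv.min_const (hF.nonneg hx v) (c * δ)).const_mul ha0).mono (hnear hwx v)
  · have hfar : c * δ ≤ F x (w - x) := calc
      c * δ ≤ c * ‖w - x‖ := by rw [← dist_eq_norm]; gcongr
      _ ≤ F x (w - x) := (hbounds.self_of_nhds (w - x)).1
    have hderiv := HadamardDerivLE.min_const_of_le (P := fun z => F x (z - x)) hfar v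
    exact (hderiv.const_mul ha0).mono (by simpa using hF.nonneg hw v)

theorem exists_pseudoNormEstimatesOn_ball (hF : IsPseudoNormFunction n Ω F)
    (hW : WeakLipschitz n Ω F) (hΩ : IsOpen Ω) (hx : x ∈ Ω) :
    ∃ r > 0, ∃ c > 0, ∃ C > 0,
      Metric.ball x r ⊆ Ω ∧ PseudoNormEstimatesOn F (Metric.ball x r) c C := by
  obtain ⟨c, hc, C, hC, hbounds⟩ := hF.exists_eventually_bounds hΩ hx
  obtain ⟨U, hU, hUΩ, C', -, hlip⟩ := hW x hx
  obtain ⟨r, hr, hball⟩ := Metric.eventually_nhds_iff_ball.1 (hbounds.and hU)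
  refine ⟨r, hr, c, hc, max C C', lt_max_of_lt_left hC, fun z hz => hUΩ (hball z hz).2,
    fun z hz v => ⟨((hball z hz).1 v).1, ((hball z hz).1 v).2.trans ?_⟩,
    fun z₁ h₁ z₂ h₂ v => (hlip z₁ (hball z₁ h₁).2 z₂ (hball z₂ h₂).2 v).trans ?_⟩
  · gcongr
    exact le_max_left C C'
  · gcongr
    exact le_max_right C C'

end IsPseudoNormFunction

namespace InducesDist

theorem le_integral_segment (hI : InducesDist n Ω F d) (hF : IsPseudoNormFunction n Ω F)
    (hΩ : Convex ℝ Ω) (hx : x ∈ Ω) (hy : x + y ∈ Ω) :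
    d x (x + y) ≤ ∫ t in (0 : ℝ)..1, F (x + t • y) y := by
  rw [hI x hx _ hy]
  refine csInf_le ⟨0, ?_⟩ (integral_segment_mem_curveIntegrals hΩ hx hy F)
  rintro L ⟨γ, -, hγΩ, -, -, rfl⟩
  exact intervalIntegral.integral_nonneg zero_le_one fun t ht => hF.nonneg (hγΩ t ht) _

theorem sub_le (hI : InducesDist n Ω F d) (hΩ : Convex ℝ Ω)
    (hF : ContinuousOn (fun p : _ × _ => F p.1 p.2) (Ω ×ˢ univ))
    {P : EuclideanSpace ℝ (Fin n) → ℝ} (hP : ContinuousOn P Ω)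
    (hPF : ∀ z ∈ Ω, ∀ v, HadamardDerivLE P z v (F z v)) (hx : x ∈ Ω) (hy : x + y ∈ Ω) :
    P (x + y) - P x ≤ d x (x + y) := by
  rw [hI x hx _ hy]
  exact le_csInf ⟨_, integral_segment_mem_curveIntegrals hΩ hx hy F⟩
    (sub_mem_lowerBounds_curveIntegrals hF hP hPF)

theorem exists_mul_min_le (hI : InducesDist n Ω F d) (hF : IsPseudoNormFunction n Ω F)
    (hΩ : IsOpen Ω) (hΩconv : Convex ℝ Ω) (hx : x ∈ Ω) {a : ℝ} (ha0 : 0 < a) (ha1 : a < 1) :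
    ∃ m > 0, ∀ y, x + y ∈ Ω → a * min (F x y) m ≤ d x (x + y) := by
  obtain ⟨m, hm, hderiv⟩ := hF.exists_hadamardDerivLE_mul_min hΩ hx ha0 ha1
  have hcont := hF.continuous_right hx
  refine ⟨m, hm, fun y hy => ?_⟩
  have h := hI.sub_le hΩconv hF.1 (Continuous.continuousOn (by fun_prop)) hderiv hx hy
  simpa [(hF.isPosHomogeneous hx).map_zero, hm.le] using h

theorem eventually_lt_div (hI : InducesDist n Ω F d) (hF : IsPseudoNormFunction n Ω F)
    (hΩ : IsOpen Ω) (hΩconv : Convex ℝ Ω) (hx : x ∈ Ω) {r : ℝ} (hr : r < F x y) :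
    ∀ᶠ t : ℝ in 𝓝[>] 0, r < d x (x + t • y) / t := by
  obtain ⟨a, hra, ha⟩ : ∃ a, r < a * F x y ∧ a ∈ Ioo (0 : ℝ) 1 := by
    have hlim : Tendsto (fun a : ℝ => a * F x y) (𝓝[<] 1) (𝓝 (F x y)) :=
      ((continuous_mul_const (F x y)).tendsto' 1 _ (one_mul _)).mono_left nhdsWithin_le_nhds
    exact ((hlim.eventually_const_lt hr).and (Ioo_mem_nhdsLT zero_lt_one)).exists
  obtain ⟨m, hm, hlower⟩ := hI.exists_mul_min_le hF hΩ hΩconv hx ha.1 ha.2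
  have hsmall : ∀ᶠ t : ℝ in 𝓝[>] 0, t * F x y < m := by
    have hlim : Tendsto (fun t : ℝ => t * F x y) (𝓝[>] 0) (𝓝 0) :=
      ((continuous_mul_const (F x y)).tendsto' 0 _ (zero_mul _)).mono_left nhdsWithin_le_nhds
    exact hlim.eventually_lt_const hm
  filter_upwards [eventually_add_smul_mem hΩ hx y, hsmall, self_mem_nhdsWithin]
    with t htΩ htm (ht : 0 < t)
  rw [lt_div_iff₀ ht]
  calc r * t < a * F x y * t := mul_lt_mul_of_pos_right hra ht
    _ = a * min (F x (t • y)) m := by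
      rw [hF.isPosHomogeneous hx t ht, min_eq_left htm.le]
      ring
    _ ≤ d x (x + t • y) := hlower _ htΩ

theorem eventually_div_lt (hI : InducesDist n Ω F d) (hF : IsPseudoNormFunction n Ω F)
    (hΩ : IsOpen Ω) (hΩconv : Convex ℝ Ω) (hx : x ∈ Ω) {r : ℝ} (hr : F x y < r) :
    ∀ᶠ t : ℝ in 𝓝[>] 0, d x (x + t • y) / t < r := by
  obtain ⟨q, hFq, hqr⟩ := exists_between hr
  have hcont : ContinuousAt (fun z => F z y) x :=
    (hF.continuousAt hΩ hx y).comp (f := fun z => (z, y)) (by fun_prop)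
  obtain ⟨δ, hδ, hball⟩ := Metric.eventually_nhds_iff_ball.1
    ((hcont.eventually_lt_const hFq).and (hΩ.eventually_mem hx))
  have hxδ : x ∈ Metric.ball x δ := Metric.mem_ball_self hδ
  filter_upwards [eventually_add_smul_mem Metric.isOpen_ball hxδ y, self_mem_nhdsWithin]
    with t htδ (ht : 0 < t)
  have htΩ : x + t • y ∈ Ω := (hball _ htδ).2
  have hspeed : ∀ s ∈ Icc (0 : ℝ) 1, F (x + s • t • y) (t • y) ≤ t * q := by
    intro s hs
    obtain ⟨hlt, hsΩ⟩ := hball _ ((convex_ball x δ).add_smul_mem hxδ htδ hs)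
    rw [hF.isPosHomogeneous hsΩ t ht]
    exact mul_le_mul_of_nonneg_left hlt.le ht.le
  rw [div_lt_iff₀ ht]
  calc d x (x + t • y) ≤ ∫ s in (0 : ℝ)..1, F (x + s • t • y) (t • y) :=
        hI.le_integral_segment hF hΩconv hx htΩ
    _ ≤ ∫ _ in (0 : ℝ)..1, t * q :=
        intervalIntegral.integral_mono_on zero_le_one
          (intervalIntegrable_segment hΩconv hF.1 hx htΩ) intervalIntegrable_const hspeed
    _ = q * t := by simp [mul_comm]
    _ < r * t := mul_lt_mul_of_pos_right hqr ht

theorem hasInfinitesimalMetric (hI : InducesDist n Ω F d) (hF : IsPseudoNormFunction n Ω F)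
    (hΩ : IsOpen Ω) (hΩconv : Convex ℝ Ω) : HasInfinitesimalMetric Ω d F := fun _ hx _ =>
  tendsto_order.2 ⟨fun _ hr => hI.eventually_lt_div hF hΩ hΩconv hx hr,
    fun _ hr => hI.eventually_div_lt hF hΩ hΩconv hx hr⟩

theorem hasLocalMetricEstimates (hI : InducesDist n Ω F d) (hF : IsPseudoNormFunction n Ω F)
    (hW : WeakLipschitz n Ω F) (hΩ : IsOpen Ω) (hΩconv : Convex ℝ Ω)
    (hd : IsAsymmetricMetric n Ω d) (hadd : IsAdditiveOnSegments Ω d) :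
    HasLocalMetricEstimates Ω d := by
  intro x hx
  obtain ⟨r, hr, c, hc, C, hC, hBΩ, hest⟩ := hF.exists_pseudoNormEstimatesOn_ball hW hΩ hx
  exact ⟨r, hr, c, hc, C, hC, hBΩ, hest.metricEstimatesOn
    ((hI.hasInfinitesimalMetric hF hΩ hΩconv).mono hBΩ) (convex_ball x r) (hadd.mono hBΩ)
    (hF.1.mono (prod_mono hBΩ Subset.rfl)) fun z hz => (hd.continuousOn_right (hBΩ hz)).mono hBΩ⟩

end InducesDist

namespace HasInfinitesimalMetric

theorem weakLipschitz (hdF : HasInfinitesimalMetric Ω d F) (hB : HasLocalMetricEstimates Ω d) :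
    WeakLipschitz n Ω F := by
  intro x hx
  obtain ⟨r, hr, c, -, C, hC, hBΩ, hest⟩ := hdF.exists_pseudoNormEstimatesOn_ball hB hx
  exact ⟨_, Metric.ball_mem_nhds x hr, hBΩ, C, hC, hest.2⟩

theorem isPseudoNormFunction (hdF : HasInfinitesimalMetric Ω d F)
    (hB : HasLocalMetricEstimates Ω d) (hd : IsAsymmetricMetric n Ω d) :
    IsPseudoNormFunction n Ω F := by
  have hsub : ∀ x ∈ Ω, ∀ y₁ y₂, F x (y₁ + y₂) ≤ F x y₁ + F x y₂ := by
    intro x hx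
    obtain ⟨r, hr, c, -, C, -, hBΩ, hest⟩ := hB x hx
    exact (hdF.mono hBΩ).subadditive Metric.isOpen_ball
      (fun x₁ h₁ x₂ h₂ x₃ h₃ => hd.2.2 x₁ (hBΩ h₁) x₂ (hBΩ h₂) x₃ (hBΩ h₃)) hest
      (Metric.mem_ball_self hr)
  refine ⟨?_, fun x hx => ⟨fun y => ?_, hdF.isPosHomogeneous hx, hsub x hx⟩⟩
  · rintro ⟨x, y⟩ ⟨hx, -⟩
    obtain ⟨r, hr, c, -, C, -, -, hest⟩ := hdF.exists_pseudoNormEstimatesOn_ball hB hx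
    exact (hest.continuousAt (Metric.ball_mem_nhds x hr) (hsub x hx) y).continuousWithinAt
  · obtain ⟨r, hr, c, hc, C, -, -, hest⟩ := hdF.exists_pseudoNormEstimatesOn_ball hB hx
    have hlower : c * ‖y‖ ≤ F x y := (hest.1 x (Metric.mem_ball_self hr) y).1
    refine ⟨(by positivity : 0 ≤ c * ‖y‖).trans hlower, fun h => by_contra fun hy => ?_, ?_⟩
    · exact (mul_pos hc (norm_pos_iff.2 hy)).not_ge (hlower.trans_eq h)
    · rintro rfl
      exact (hdF.isPosHomogeneous hx).map_zero

theorem inducesDist (hdF : HasInfinitesimalMetric Ω d F) (hB : HasLocalMetricEstimates Ω d)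
    (hF : ContinuousOn (fun p : _ × _ => F p.1 p.2) (Ω ×ˢ univ)) (hΩ : Convex ℝ Ω)
    (hd : IsAsymmetricMetric n Ω d) (hadd : IsAdditiveOnSegments Ω d) : InducesDist n Ω F d := by
  intro x₁ h₁ x₂ h₂
  suffices hleast : IsLeast (curveIntegrals Ω F x₁ x₂) (d x₁ x₂) from hleast.csInf_eq.symm
  obtain ⟨y, rfl⟩ : ∃ y, x₂ = x₁ + y := ⟨x₂ - x₁, (add_sub_cancel x₁ x₂).symm⟩
  constructor
  · rw [← hdF.integral_segment_eq hΩ hadd hF (hd.continuousOn_right h₁) h₁ h₂]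
    exact integral_segment_mem_curveIntegrals hΩ h₁ h₂ F
  · have hderiv : ∀ z ∈ Ω, ∀ v, HadamardDerivLE (d x₁) z v (F z v) := by
      intro z hz v
      obtain ⟨r, hr, c, -, C, -, hBΩ, hest⟩ := hB z hz
      exact hdF.hadamardDerivLE hd.2.2 Metric.isOpen_ball hBΩ hest h₁ (Metric.mem_ball_self hr) v
    have hlower := sub_mem_lowerBounds_curveIntegrals (x₁ := x₁) (x₂ := x₁ + y) hF
      (hd.continuousOn_right h₁) hderiv
    rwa [hadd.self_eq_zero h₁, sub_zero] at hlower

end HasInfinitesimalMetric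

theorem stmt_6_general (hΩ : IsOpen Ω) (hΩconv : Convex ℝ Ω) (hd : IsAsymmetricMetric n Ω d)
    (hpf : IsProjFlatMetric n Ω d) :
    ((∃ F, IsPseudoNormFunction n Ω F ∧ WeakLipschitz n Ω F ∧ InducesDist n Ω F d) ↔
      HasLocalMetricEstimates Ω d) ∧
    ∀ F, IsPseudoNormFunction n Ω F → InducesDist n Ω F d →
      (ContDiffOn ℝ (⊤ : ℕ∞) (fun p : _ × _ => d p.1 p.2) Ω.offDiag ↔
        ContDiffOn ℝ (⊤ : ℕ∞) (fun p : _ × _ => F p.1 p.2) (Ω ×ˢ {y | y ≠ 0})) := by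
  have hadd : IsAdditiveOnSegments Ω d := hpf.isAdditiveOnSegments hd hΩconv
  refine ⟨⟨?_, fun hB => ?_⟩, fun F hF hI => ?_⟩
  · rintro ⟨F, hF, hW, hI⟩
    exact hI.hasLocalMetricEstimates hF hW hΩ hΩconv hd hadd
  · obtain ⟨F, hdF⟩ := hB.exists_hasInfinitesimalMetric hadd
    have hF : IsPseudoNormFunction n Ω F := hdF.isPseudoNormFunction hB hd
    exact ⟨F, hF, hdF.weakLipschitz hB, hdF.inducesDist hB hF.1 hΩconv hd hadd⟩
  · have hdF : HasInfinitesimalMetric Ω d F := hI.hasInfinitesimalMetric hF hΩ hΩconv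
    exact ⟨hdF.contDiffOn_of_contDiffOn_offDiag hΩ hΩconv hadd,
      hdF.contDiffOn_offDiag hΩ hΩconv hadd (fun _ => hd.continuousOn_right) hF.1⟩

end InducedMetric

/-- A projectively flat asymmetric metric `d` on a convex domain `Ω` is
induced by a pseudo-norm function satisfying the weak Lipschitz condition if and only if the
two-sided comparison and Lipschitz estimates (B) hold locally; moreover, for any such
inducing pseudo-norm function `F`, `d` is `C^∞` off the diagonal iff `F` is `C^∞` on
`Ω × (ℝⁿ \ {0})`. -/
theorem stmt_6 (n : ℕ) (hn : 1 ≤ n)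
    (Ω : Set (EuclideanSpace ℝ (Fin n))) (hΩne : Ω.Nonempty)
    (hΩopen : IsOpen Ω) (hΩconv : Convex ℝ Ω)
    (d : EuclideanSpace ℝ (Fin n) → EuclideanSpace ℝ (Fin n) → ℝ)
    (hd : IsAsymmetricMetric n Ω d) (hpf : IsProjFlatMetric n Ω d) :
    ((∃ F, IsPseudoNormFunction n Ω F ∧ WeakLipschitz n Ω F ∧ InducesDist n Ω F d) ↔
      (∀ x ∈ Ω, ∃ r : ℝ, 0 < r ∧ ∃ c : ℝ, 0 < c ∧ ∃ C : ℝ, 0 < C ∧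
        Metric.ball x r ⊆ Ω ∧
        ∀ x₁ ∈ Metric.ball x r, ∀ x₂ ∈ Metric.ball x r,
          (c * ‖x₂ - x₁‖ ≤ d x₁ x₂ ∧ d x₁ x₂ ≤ C * ‖x₂ - x₁‖) ∧
          ∀ y : EuclideanSpace ℝ (Fin n), x₁ + y ∈ Metric.ball x r →
            x₂ + y ∈ Metric.ball x r →
            |d x₁ (x₁ + y) - d x₂ (x₂ + y)| ≤ C * ‖y‖ * ‖x₂ - x₁‖)) ∧
    (∀ F, IsPseudoNormFunction n Ω F → WeakLipschitz n Ω F → InducesDist n Ω F d →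
      (ContDiffOn ℝ (⊤ : ℕ∞)
          (fun p : EuclideanSpace ℝ (Fin n) × EuclideanSpace ℝ (Fin n) => d p.1 p.2)
          {p : EuclideanSpace ℝ (Fin n) × EuclideanSpace ℝ (Fin n) |
            p.1 ∈ Ω ∧ p.2 ∈ Ω ∧ p.1 ≠ p.2} ↔
        ContDiffOn ℝ (⊤ : ℕ∞)
          (fun p : EuclideanSpace ℝ (Fin n) × EuclideanSpace ℝ (Fin n) => F p.1 p.2)
          (Ω ×ˢ {y | y ≠ 0}))) := by
  have hgen := stmt_6_general hΩopen hΩconv hd hpf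
  exact ⟨hgen.1, fun F hF _ hI => hgen.2 F hF hI⟩

end
end

section
/- Let n ≥ 1, let b ∈ ℝ, and let x, y ∈ ℝⁿ with |b|·‖x‖ < 1. Then there exists a unique t ∈ ℝ satisfying t = b·‖y + t•x‖, and it is given explicitly by t = (b·√((1 − b²·‖x‖²)·‖y‖² + b²·⟨x,y⟩²) + b²·⟨x,y⟩) / (1 − b²·‖x‖²). -/
open scoped RealInnerProductSpace

/-!
Writing `t = b * s`, the equation becomes `s = ‖y + (b * s) • x‖`, so `s` is a nonnegative root of
the quadratic `(1 - b² ‖x‖²) s² = 2 b ⟪x, y⟫ s + ‖y‖²` obtained by squaring. Its leading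
coefficient is positive and the product of its roots is nonpositive, so `s` is the larger root; in
the borderline case `‖y‖ = 0` both roots vanish because `⟪x, y⟫ = 0`.
-/

section Quadratic

variable {a p c s : ℝ}

theorem le_mul_and_quadratic_iff_eq_larger_root (ha : 0 < a) (hdisc : 0 ≤ a * c + p ^ 2) :
    (p ≤ a * s ∧ a * s ^ 2 = 2 * p * s + c) ↔ s = (√(a * c + p ^ 2) + p) / a := by
  have complete_square : a * s ^ 2 = 2 * p * s + c ↔ a * c + p ^ 2 = (a * s - p) ^ 2 := by
    rw [← mul_right_inj' ha.ne']
    constructor <;> intro h <;> linear_combination -h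
  calc (p ≤ a * s ∧ a * s ^ 2 = 2 * p * s + c)
      ↔ 0 ≤ a * s - p ∧ a * c + p ^ 2 = (a * s - p) ^ 2 := by rw [complete_square, sub_nonneg]
    _ ↔ √(a * c + p ^ 2) = a * s - p := by
      constructor
      · rintro ⟨hnonneg, hsq⟩
        rw [hsq, Real.sqrt_sq hnonneg]
      · intro hsqrt
        rw [← hsqrt]
        exact ⟨Real.sqrt_nonneg _, (Real.sq_sqrt hdisc).symm⟩
    _ ↔ s = (√(a * c + p ^ 2) + p) / a := by
      rw [eq_div_iff ha.ne', mul_comm s, eq_sub_iff_add_eq, eq_comm]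

theorem le_mul_of_nonneg_of_quadratic (ha : 0 ≤ a) (hc : 0 ≤ c) (hpc : c = 0 → p ≤ 0)
    (hs : 0 ≤ s) (hroot : a * s ^ 2 = 2 * p * s + c) : p ≤ a * s := by
  by_contra! hlt
  have hp : 0 < p := (mul_nonneg ha hs).trans_lt hlt
  have hsum : s * (p - a * s) + p * s + c = 0 := by linear_combination -hroot
  have hc_zero : c = 0 := by
    linarith only [hsum, hc, mul_nonneg hs (sub_nonneg.2 hlt.le), mul_nonneg hp.le hs]
  exact (hpc hc_zero).not_gt hp

theorem larger_root_nonneg (ha : 0 ≤ a) (hc : 0 ≤ c) : 0 ≤ (√(a * c + p ^ 2) + p) / a := by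
  have habs : |p| ≤ √(a * c + p ^ 2) :=
    Real.abs_le_sqrt (le_add_of_nonneg_left (mul_nonneg ha hc))
  exact div_nonneg (neg_le_iff_add_nonneg.1 ((neg_le_abs p).trans habs)) ha

theorem nonneg_and_quadratic_iff_eq_larger_root (ha : 0 < a) (hc : 0 ≤ c) (hpc : c = 0 → p ≤ 0) :
    (0 ≤ s ∧ a * s ^ 2 = 2 * p * s + c) ↔ s = (√(a * c + p ^ 2) + p) / a := by
  have larger_root_iff := le_mul_and_quadratic_iff_eq_larger_root (s := s) ha
    (add_nonneg (mul_nonneg ha.le hc) (sq_nonneg p))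
  constructor
  · rintro ⟨hs, hroot⟩
    exact larger_root_iff.1 ⟨le_mul_of_nonneg_of_quadratic ha.le hc hpc hs hroot, hroot⟩
  · intro hs
    exact ⟨hs ▸ larger_root_nonneg ha.le hc, (larger_root_iff.2 hs).2⟩

end Quadratic

theorem one_sub_sq_mul_sq_pos {b r : ℝ} (hr : 0 ≤ r) (h : |b| * r < 1) :
    0 < 1 - b ^ 2 * r ^ 2 := by
  rw [sub_pos, ← sq_abs b, ← mul_pow]
  exact pow_lt_one₀ (by positivity) h two_ne_zero

section InnerProductSpace

variable {E : Type*} [SeminormedAddCommGroup E] [InnerProductSpace ℝ E]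

theorem norm_add_smul_sq_real (x y : E) (r : ℝ) :
    ‖y + r • x‖ ^ 2 = ‖y‖ ^ 2 + 2 * r * ⟪x, y⟫ + r ^ 2 * ‖x‖ ^ 2 := by
  rw [norm_add_sq_real, norm_smul, mul_pow, Real.norm_eq_abs, sq_abs, real_inner_smul_right,
    real_inner_comm]
  ring

theorem eq_norm_add_smul_iff_nonneg_and_quadratic (b s : ℝ) (x y : E) :
    s = ‖y + (b * s) • x‖ ↔
      0 ≤ s ∧ (1 - b ^ 2 * ‖x‖ ^ 2) * s ^ 2 = 2 * (b * ⟪x, y⟫) * s + ‖y‖ ^ 2 := by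
  have hsq := norm_add_smul_sq_real x y (b * s)
  constructor
  · intro hs
    rw [← hs] at hsq
    exact ⟨hs ▸ norm_nonneg _, by linear_combination hsq⟩
  · rintro ⟨hs, hroot⟩
    rw [← sq_eq_sq₀ hs (norm_nonneg _), hsq]
    linear_combination hroot

theorem eq_norm_add_smul_iff {b : ℝ} {x : E} (y : E) (h : |b| * ‖x‖ < 1) (s : ℝ) :
    s = ‖y + (b * s) • x‖ ↔
      s = (√((1 - b ^ 2 * ‖x‖ ^ 2) * ‖y‖ ^ 2 + (b * ⟪x, y⟫) ^ 2) + b * ⟪x, y⟫) /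
        (1 - b ^ 2 * ‖x‖ ^ 2) := by
  rw [eq_norm_add_smul_iff_nonneg_and_quadratic]
  refine nonneg_and_quadratic_iff_eq_larger_root (one_sub_sq_mul_sq_pos (norm_nonneg x) h)
    (sq_nonneg _) fun hy ↦ ?_
  rw [inner_eq_zero_of_right x (sq_eq_zero_iff.1 hy), mul_zero]

theorem stmt_8_general {b : ℝ} {x : E} (y : E) (h : |b| * ‖x‖ < 1) (t : ℝ) :
    t = b * ‖y + t • x‖ ↔
      t = (b * √((1 - b ^ 2 * ‖x‖ ^ 2) * ‖y‖ ^ 2 + b ^ 2 * ⟪x, y⟫ ^ 2) + b ^ 2 * ⟪x, y⟫) /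
        (1 - b ^ 2 * ‖x‖ ^ 2) := by
  have factor_b (S A : ℝ) :
      (b * S + b ^ 2 * ⟪x, y⟫) / A = b * ((S + b * ⟪x, y⟫) / A) := by ring
  rw [← mul_pow b ⟪x, y⟫, factor_b]
  constructor
  · intro ht
    have hs : ‖y + t • x‖ = ‖y + (b * ‖y + t • x‖) • x‖ := by rw [← ht]
    rwa [(eq_norm_add_smul_iff y h _).1 hs] at ht
  · rintro rfl
    exact congrArg (b * ·) ((eq_norm_add_smul_iff y h _).2 rfl)

end InnerProductSpace

/-- For `|b|·‖x‖ < 1`, the equation `t = b·‖y + t•x‖` has a unique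
solution, given explicitly by
`t = (b·√((1 − b²‖x‖²)‖y‖² + b²⟨x,y⟩²) + b²⟨x,y⟩)/(1 − b²‖x‖²)`. -/
theorem stmt_8 (n : ℕ) (hn : 1 ≤ n) (b : ℝ)
    (x y : EuclideanSpace ℝ (Fin n)) (h : |b| * ‖x‖ < 1) :
    ∀ t : ℝ,
      t = b * ‖y + t • x‖ ↔
      t = (b * Real.sqrt ((1 - b ^ 2 * ‖x‖ ^ 2) * ‖y‖ ^ 2 + b ^ 2 * ⟪x, y⟫ ^ 2) +
            b ^ 2 * ⟪x, y⟫) / (1 - b ^ 2 * ‖x‖ ^ 2) := by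
  exact stmt_8_general y h
end

section
/- Let a < 0 and let f : ℝ → ℝ be three times continuously differentiable on the interval (a, +∞), with f(0) = 0, f′(0) = 1, f′(t) > 0 for all t > a, and 2·f′′′(t)·f′(t) − 3·f′′(t)² = −4·f′(t)² for all t > a. Then one of the following holds: (1) f(t) = (e^{2t} − 1)/2 for all t ≥ 0; (2) f(t) = (1 − e^{−2t})/2 for all t ≥ 0; (3) there exists c ∈ ℝ with c < 0 or c > 1 such that f(t) = (c − 1)·(e^{2t} − 1)/(2·(c·e^{2t} − 1)) for all t ≥ 0. -/
/-!
The equation says that the Schwarzian derivative of `f` is the constant `-2`. For any `f` with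
`f′ > 0`, the functions `w = (f′)^(-1/2)` and `f * w` both solve the linear equation
`y″ = -(S f / 2) y`, which here is `y″ = y`. The initial values give `w = cosh + m sinh` and
`f * w = sinh` with `m = -f″(0) / 2`, hence `f = sinh / (cosh + m sinh)`. As `w > 0` on all of
`[0, ∞)`, necessarily `m ≥ -1`; the three alternatives are `m = -1`, `m = 1`, and the rest with
`c = (m + 1) / (m - 1)`.
-/

section LinearODE

variable {s : Set ℝ} {y y' : ℝ → ℝ} {k t₀ t : ℝ}

theorem eq_mul_exp_of_hasDerivAt (hs : IsOpen s) (hs' : IsPreconnected s)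
    (hy : ∀ x ∈ s, HasDerivAt y (k * y x) x) (ht₀ : t₀ ∈ s) (ht : t ∈ s) :
    y t = y t₀ * Real.exp (k * (t - t₀)) := by
  have hderiv : ∀ x ∈ s, HasDerivAt (fun x ↦ y x * Real.exp (-(k * (x - t₀)))) 0 x := by
    intro x hx
    have hexp := (((hasDerivAt_id' x).sub_const t₀).const_mul k).fun_neg.exp
    exact ((hy x hx).fun_mul hexp).congr_deriv (by ring)
  have hconst : y t * Real.exp (-(k * (t - t₀))) = y t₀ := by
    simpa using hs.is_const_of_deriv_eq_zero hs'
      (fun x hx ↦ (hderiv x hx).differentiableAt.differentiableWithinAt)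
      (fun x hx ↦ (hderiv x hx).deriv) ht ht₀
  rw [← hconst, mul_assoc, ← Real.exp_add, neg_add_cancel, Real.exp_zero, mul_one]

-- The equation factors: `y′ + k y` and `y′ - k y` solve first-order equations with rates `k`, `-k`.
theorem eq_cosh_add_sinh_of_hasDerivAt (hs : IsOpen s) (hs' : IsPreconnected s) (hk : k ≠ 0)
    (hy : ∀ x ∈ s, HasDerivAt y (y' x) x) (hy' : ∀ x ∈ s, HasDerivAt y' (k ^ 2 * y x) x)
    (ht₀ : t₀ ∈ s) (ht : t ∈ s) :
    y t = y t₀ * Real.cosh (k * (t - t₀)) + y' t₀ / k * Real.sinh (k * (t - t₀)) := by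
  have hadd : y' t + k * y t = (y' t₀ + k * y t₀) * Real.exp (k * (t - t₀)) :=
    eq_mul_exp_of_hasDerivAt (y := fun x ↦ y' x + k * y x) hs hs'
      (fun x hx ↦ ((hy' x hx).fun_add ((hy x hx).const_mul k)).congr_deriv (by ring)) ht₀ ht
  have hsub : y' t - k * y t = (y' t₀ - k * y t₀) * Real.exp (-k * (t - t₀)) :=
    eq_mul_exp_of_hasDerivAt (y := fun x ↦ y' x - k * y x) hs hs'
      (fun x hx ↦ ((hy' x hx).fun_sub ((hy x hx).const_mul k)).congr_deriv (by ring)) ht₀ ht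
  rw [neg_mul] at hsub
  rw [Real.cosh_eq, Real.sinh_eq]
  field_simp
  linear_combination hadd - hsub

end LinearODE

/-- The Schwarzian derivative `S f = (f″ / f′)′ - (f″ / f′)² / 2`; the quotient `f″ / f′` is the
logarithmic derivative of `f′`. Meaningful only where `f′ ≠ 0`. -/
noncomputable def schwarzian (f : ℝ → ℝ) (t : ℝ) : ℝ :=
  deriv (logDeriv (deriv f)) t - logDeriv (deriv f) t ^ 2 / 2

/-- The function `w = (f′)^(-1/2)`, which linearises the Schwarzian: `w″ = -(S f / 2) w`. The real
power has this meaning only where `f′ > 0`. -/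
noncomputable def rsqrtDeriv (f : ℝ → ℝ) (t : ℝ) : ℝ :=
  deriv f t ^ (-1 / 2 : ℝ)

section Schwarzian

variable {f : ℝ → ℝ} {t : ℝ}

theorem hasDerivAt_logDeriv_deriv (hf' : DifferentiableAt ℝ (deriv f) t)
    (hf'' : DifferentiableAt ℝ (deriv (deriv f)) t) (hne : deriv f t ≠ 0) :
    HasDerivAt (logDeriv (deriv f)) (schwarzian f t + logDeriv (deriv f) t ^ 2 / 2) t :=
  (hf''.div hf' hne).hasDerivAt.congr_deriv (sub_add_cancel _ _).symm

theorem schwarzian_eq (hf' : DifferentiableAt ℝ (deriv f) t)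
    (hf'' : DifferentiableAt ℝ (deriv (deriv f)) t) (hne : deriv f t ≠ 0) :
    schwarzian f t =
      deriv (deriv (deriv f)) t / deriv f t - 3 / 2 * (deriv (deriv f) t / deriv f t) ^ 2 := by
  have hderiv := deriv_div hf'' hf' hne
  rw [schwarzian, logDeriv, hderiv, Pi.div_apply]
  field_simp
  ring

theorem schwarzian_eq_iff (hf' : DifferentiableAt ℝ (deriv f) t)
    (hf'' : DifferentiableAt ℝ (deriv (deriv f)) t) (hne : deriv f t ≠ 0) {c : ℝ} :
    schwarzian f t = c ↔
      2 * deriv (deriv (deriv f)) t * deriv f t - 3 * deriv (deriv f) t ^ 2 =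
        2 * c * deriv f t ^ 2 := by
  rw [schwarzian_eq hf' hf'' hne]
  field_simp

theorem rsqrtDeriv_pos (hpos : 0 < deriv f t) : 0 < rsqrtDeriv f t :=
  Real.rpow_pos_of_pos hpos _

theorem hasDerivAt_rsqrtDeriv (hf' : DifferentiableAt ℝ (deriv f) t) (hne : deriv f t ≠ 0) :
    HasDerivAt (rsqrtDeriv f) (-(logDeriv (deriv f) t / 2) * rsqrtDeriv f t) t := by
  refine (hf'.hasDerivAt.rpow_const (p := -1 / 2) (.inl hne)).congr_deriv ?_
  rw [Real.rpow_sub_one hne, logDeriv_apply, rsqrtDeriv]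
  ring

theorem hasDerivAt_deriv_rsqrtDeriv (hf' : DifferentiableAt ℝ (deriv f) t)
    (hf'' : DifferentiableAt ℝ (deriv (deriv f)) t) (hne : deriv f t ≠ 0) :
    HasDerivAt (fun x ↦ -(logDeriv (deriv f) x / 2) * rsqrtDeriv f x)
      (-(schwarzian f t / 2) * rsqrtDeriv f t) t := by
  have hlog := (hasDerivAt_logDeriv_deriv hf' hf'' hne).div_const 2
  exact (hlog.fun_neg.fun_mul (hasDerivAt_rsqrtDeriv hf' hne)).congr_deriv (by ring)

theorem hasDerivAt_sub_mul_rsqrtDeriv (hf' : DifferentiableAt ℝ (deriv f) t)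
    (hne : deriv f t ≠ 0) (b : ℝ) :
    HasDerivAt (fun x ↦ (f x - b) * rsqrtDeriv f x)
      (deriv f t * rsqrtDeriv f t + (f t - b) * (-(logDeriv (deriv f) t / 2) * rsqrtDeriv f t)) t :=
  ((differentiableAt_of_deriv_ne_zero hne).hasDerivAt.sub_const b).fun_mul
    (hasDerivAt_rsqrtDeriv hf' hne)

-- With `w = rsqrtDeriv f`, the cross terms `f″ w + 2 f′ w′` of `((f - b) w)″` cancel.
theorem hasDerivAt_deriv_sub_mul_rsqrtDeriv (hf' : DifferentiableAt ℝ (deriv f) t)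
    (hf'' : DifferentiableAt ℝ (deriv (deriv f)) t) (hne : deriv f t ≠ 0) (b : ℝ) :
    HasDerivAt
      (fun x ↦ deriv f x * rsqrtDeriv f x +
        (f x - b) * (-(logDeriv (deriv f) x / 2) * rsqrtDeriv f x))
      (-(schwarzian f t / 2) * ((f t - b) * rsqrtDeriv f t)) t := by
  have hf := (differentiableAt_of_deriv_ne_zero hne).hasDerivAt
  have hw := hasDerivAt_rsqrtDeriv hf' hne
  have hw' := hasDerivAt_deriv_rsqrtDeriv hf' hf'' hne
  refine ((hf'.hasDerivAt.fun_mul hw).fun_add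
    ((hf.sub_const b).fun_mul hw')).congr_deriv ?_
  have hlog : deriv (deriv f) t = logDeriv (deriv f) t * deriv f t := by
    rw [logDeriv_apply, div_mul_cancel₀ _ hne]
  rw [hlog]
  ring

end Schwarzian

section ConstantSchwarzian

variable {s : Set ℝ} {f : ℝ → ℝ} {k t₀ t : ℝ}

theorem rsqrtDeriv_eq_of_schwarzian_eq (hs : IsOpen s) (hs' : IsPreconnected s)
    (hf' : DifferentiableOn ℝ (deriv f) s) (hf'' : DifferentiableOn ℝ (deriv (deriv f)) s)
    (hne : ∀ x ∈ s, deriv f x ≠ 0) (hk : k ≠ 0) (hS : ∀ x ∈ s, schwarzian f x = -2 * k ^ 2)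
    (ht₀ : t₀ ∈ s) (ht : t ∈ s) :
    rsqrtDeriv f t = rsqrtDeriv f t₀ *
      (Real.cosh (k * (t - t₀)) -
        logDeriv (deriv f) t₀ / (2 * k) * Real.sinh (k * (t - t₀))) := by
  have hw := eq_cosh_add_sinh_of_hasDerivAt hs hs' hk
    (fun x hx ↦ hasDerivAt_rsqrtDeriv (hf'.differentiableAt (hs.mem_nhds hx)) (hne x hx))
    (fun x hx ↦ (hasDerivAt_deriv_rsqrtDeriv (hf'.differentiableAt (hs.mem_nhds hx))
      (hf''.differentiableAt (hs.mem_nhds hx)) (hne x hx)).congr_deriv (by rw [hS x hx]; ring))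
    ht₀ ht
  rw [hw]
  ring

theorem sub_mul_rsqrtDeriv_eq_of_schwarzian_eq (hs : IsOpen s) (hs' : IsPreconnected s)
    (hf' : DifferentiableOn ℝ (deriv f) s) (hf'' : DifferentiableOn ℝ (deriv (deriv f)) s)
    (hne : ∀ x ∈ s, deriv f x ≠ 0) (hk : k ≠ 0) (hS : ∀ x ∈ s, schwarzian f x = -2 * k ^ 2)
    (ht₀ : t₀ ∈ s) (ht : t ∈ s) :
    (f t - f t₀) * rsqrtDeriv f t =
      rsqrtDeriv f t₀ * (deriv f t₀ / k * Real.sinh (k * (t - t₀))) := by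
  have hfw := eq_cosh_add_sinh_of_hasDerivAt hs hs' hk
    (fun x hx ↦ hasDerivAt_sub_mul_rsqrtDeriv (hf'.differentiableAt (hs.mem_nhds hx))
      (hne x hx) (f t₀))
    (fun x hx ↦ (hasDerivAt_deriv_sub_mul_rsqrtDeriv (hf'.differentiableAt (hs.mem_nhds hx))
      (hf''.differentiableAt (hs.mem_nhds hx)) (hne x hx) (f t₀)).congr_deriv
        (by rw [hS x hx]; ring))
    ht₀ ht
  rw [hfw]
  ring

theorem cosh_sub_sinh_pos_of_schwarzian_eq (hs : IsOpen s) (hs' : IsPreconnected s)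
    (hf' : DifferentiableOn ℝ (deriv f) s) (hf'' : DifferentiableOn ℝ (deriv (deriv f)) s)
    (hpos : ∀ x ∈ s, 0 < deriv f x) (hk : k ≠ 0) (hS : ∀ x ∈ s, schwarzian f x = -2 * k ^ 2)
    (ht₀ : t₀ ∈ s) (ht : t ∈ s) :
    0 < Real.cosh (k * (t - t₀)) -
      logDeriv (deriv f) t₀ / (2 * k) * Real.sinh (k * (t - t₀)) := by
  have hw := rsqrtDeriv_pos (hpos t ht)
  rw [rsqrtDeriv_eq_of_schwarzian_eq hs hs' hf' hf'' (fun x hx ↦ (hpos x hx).ne') hk hS ht₀ ht]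
    at hw
  exact pos_of_mul_pos_right hw (rsqrtDeriv_pos (hpos t₀ ht₀)).le

theorem eq_add_sinh_div_of_schwarzian_eq (hs : IsOpen s) (hs' : IsPreconnected s)
    (hf' : DifferentiableOn ℝ (deriv f) s) (hf'' : DifferentiableOn ℝ (deriv (deriv f)) s)
    (hpos : ∀ x ∈ s, 0 < deriv f x) (hk : k ≠ 0) (hS : ∀ x ∈ s, schwarzian f x = -2 * k ^ 2)
    (ht₀ : t₀ ∈ s) (ht : t ∈ s) :
    f t = f t₀ + deriv f t₀ / k * Real.sinh (k * (t - t₀)) /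
      (Real.cosh (k * (t - t₀)) -
        logDeriv (deriv f) t₀ / (2 * k) * Real.sinh (k * (t - t₀))) := by
  have hne : ∀ x ∈ s, deriv f x ≠ 0 := fun x hx ↦ (hpos x hx).ne'
  have hw₀ : rsqrtDeriv f t₀ ≠ 0 := (rsqrtDeriv_pos (hpos t₀ ht₀)).ne'
  have hw : rsqrtDeriv f t ≠ 0 := (rsqrtDeriv_pos (hpos t ht)).ne'
  rw [← sub_eq_iff_eq_add', ← mul_div_mul_left _ _ hw₀,
    ← rsqrtDeriv_eq_of_schwarzian_eq hs hs' hf' hf'' hne hk hS ht₀ ht, eq_div_iff hw]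
  exact sub_mul_rsqrtDeriv_eq_of_schwarzian_eq hs hs' hf' hf'' hne hk hS ht₀ ht

end ConstantSchwarzian

section NormalForms

variable {m : ℝ}

theorem neg_one_le_of_cosh_add_mul_sinh_pos
    (h : ∀ t, 0 ≤ t → 0 < Real.cosh t + m * Real.sinh t) : -1 ≤ m := by
  by_contra! hm
  -- Here `cosh t + m sinh t = exp (-t) + (m + 1) sinh t ≤ 1 + (m + 1) t`, which vanishes at `r`.
  set r : ℝ := -(m + 1)⁻¹ with hr
  have hr_pos : 0 < r := neg_pos.mpr (inv_lt_zero.mpr (by linarith))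
  have hr_mul : (m + 1) * r = -1 := by rw [hr, mul_neg, mul_inv_cancel₀ (by linarith)]
  have hsinh : (m + 1) * Real.sinh r ≤ (m + 1) * r :=
    mul_le_mul_of_nonpos_left (Real.self_le_sinh_iff.mpr hr_pos.le) (by linarith)
  have hexp : Real.cosh r - Real.sinh r ≤ 1 := by
    rw [Real.cosh_sub_sinh]
    exact Real.exp_le_one_iff.mpr (neg_nonpos.mpr hr_pos.le)
  linarith [h r hr_pos.le]

theorem sinh_div_cosh_add_mul_sinh (m t : ℝ) :
    Real.sinh t / (Real.cosh t + m * Real.sinh t) =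
      (Real.exp (2 * t) - 1) / ((m + 1) * Real.exp (2 * t) - (m - 1)) := by
  have hmul : Real.exp t * Real.exp (-t) = 1 := by
    rw [← Real.exp_add, add_neg_cancel, Real.exp_zero]
  have hnum : 2 * Real.exp t * Real.sinh t = Real.exp (2 * t) - 1 := by
    rw [Real.sinh_eq, two_mul t, Real.exp_add]
    linear_combination -hmul
  have hden : 2 * Real.exp t * (Real.cosh t + m * Real.sinh t) =
      (m + 1) * Real.exp (2 * t) - (m - 1) := by
    rw [Real.cosh_eq, Real.sinh_eq, two_mul t, Real.exp_add]
    linear_combination (1 - m) * hmul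
  rw [← hnum, ← hden, mul_div_mul_left _ _ (by positivity)]

theorem sinh_div_cosh_sub_sinh (t : ℝ) :
    Real.sinh t / (Real.cosh t - Real.sinh t) = (Real.exp (2 * t) - 1) / 2 := by
  rw [sub_eq_add_neg, ← neg_one_mul, sinh_div_cosh_add_mul_sinh]
  norm_num

theorem sinh_div_cosh_add_sinh (t : ℝ) :
    Real.sinh t / (Real.cosh t + Real.sinh t) = (1 - Real.exp (-2 * t)) / 2 := by
  have h := sinh_div_cosh_add_mul_sinh 1 t
  rw [one_mul] at h
  rw [h, neg_mul, Real.exp_neg]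
  field_simp
  ring

theorem sinh_div_cosh_add_mul_sinh_of_ne_one (hm : m ≠ 1) (t : ℝ) :
    Real.sinh t / (Real.cosh t + m * Real.sinh t) =
      ((m + 1) / (m - 1) - 1) * (Real.exp (2 * t) - 1) /
        (2 * ((m + 1) / (m - 1) * Real.exp (2 * t) - 1)) := by
  have hm' : m - 1 ≠ 0 := sub_ne_zero.mpr hm
  have hnum : (m + 1) / (m - 1) - 1 = 2 / (m - 1) := by field_simp; ring
  have hden : (m + 1) / (m - 1) * Real.exp (2 * t) - 1 =
      ((m + 1) * Real.exp (2 * t) - (m - 1)) / (m - 1) := by field_simp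
  rw [sinh_div_cosh_add_mul_sinh, hnum, hden, div_mul_eq_mul_div, mul_div_assoc',
    div_div_div_cancel_right₀ hm', mul_div_mul_left _ _ two_ne_zero]

theorem add_one_div_sub_one_neg_or_one_lt (hm : -1 < m) (hm' : m ≠ 1) :
    (m + 1) / (m - 1) < 0 ∨ 1 < (m + 1) / (m - 1) := by
  rcases hm'.lt_or_gt with hlt | hgt
  · exact .inl (div_neg_of_pos_of_neg (by linarith) (by linarith))
  · exact .inr ((one_lt_div (by linarith)).mpr (by linarith))

end NormalForms

/-- Classification of solutions of the geodesic ODE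
`2f‴f′ − 3(f″)² = −4(f′)²` with `f(0) = 0`, `f′(0) = 1` and `f′ > 0` on `(a, ∞)` (where
`a < 0`): on `[0, ∞)` one has `f(t) = (e^{2t} − 1)/2`, or `f(t) = (1 − e^{−2t})/2`, or
`f(t) = (c − 1)(e^{2t} − 1)/(2(c·e^{2t} − 1))` for some constant `c < 0` or `c > 1`. -/
theorem stmt_10 (a : ℝ) (ha : a < 0) (f : ℝ → ℝ)
    (hf : ContDiffOn ℝ 3 f (Set.Ioi a))
    (hf0 : f 0 = 0) (hf'0 : deriv f 0 = 1)
    (hf'pos : ∀ t ∈ Set.Ioi a, 0 < deriv f t)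
    (hode : ∀ t ∈ Set.Ioi a,
      2 * deriv (deriv (deriv f)) t * deriv f t - 3 * (deriv (deriv f) t) ^ 2
        = -4 * (deriv f t) ^ 2) :
    (∀ t : ℝ, 0 ≤ t → f t = (Real.exp (2 * t) - 1) / 2) ∨
    (∀ t : ℝ, 0 ≤ t → f t = (1 - Real.exp (-2 * t)) / 2) ∨
    ∃ c : ℝ, (c < 0 ∨ 1 < c) ∧
      ∀ t : ℝ, 0 ≤ t →
        f t = (c - 1) * (Real.exp (2 * t) - 1) / (2 * (c * Real.exp (2 * t) - 1)) := by
  have hcont : ContDiffOn ℝ 2 (deriv f) (Set.Ioi a) := hf.deriv_of_isOpen isOpen_Ioi (by norm_num)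
  have hf' : DifferentiableOn ℝ (deriv f) (Set.Ioi a) := hcont.differentiableOn (by norm_num)
  have hf'' : DifferentiableOn ℝ (deriv (deriv f)) (Set.Ioi a) :=
    (hcont.deriv_of_isOpen (m := 1) isOpen_Ioi (by norm_num)).differentiableOn (by norm_num)
  have hS : ∀ t ∈ Set.Ioi a, schwarzian f t = -2 * 1 ^ 2 := fun t ht ↦
    (schwarzian_eq_iff (hf'.differentiableAt (isOpen_Ioi.mem_nhds ht))
      (hf''.differentiableAt (isOpen_Ioi.mem_nhds ht)) (hf'pos t ht).ne').mpr
      (by linear_combination hode t ht)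
  obtain ⟨m, hm⟩ : ∃ m, m = -(logDeriv (deriv f) 0 / 2) := ⟨_, rfl⟩
  have hsol : ∀ t, 0 ≤ t → f t = Real.sinh t / (Real.cosh t + m * Real.sinh t) := fun t ht ↦ by
    simpa [hf0, hf'0, hm, sub_eq_add_neg] using eq_add_sinh_div_of_schwarzian_eq isOpen_Ioi
      isPreconnected_Ioi hf' hf'' hf'pos one_ne_zero hS ha (ha.trans_le ht)
  have hm_ge : -1 ≤ m := neg_one_le_of_cosh_add_mul_sinh_pos fun t ht ↦ by
    simpa [hm, sub_eq_add_neg] using cosh_sub_sinh_pos_of_schwarzian_eq isOpen_Ioi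
      isPreconnected_Ioi hf' hf'' hf'pos one_ne_zero hS ha (ha.trans_le ht)
  rcases hm_ge.eq_or_lt with rfl | hm_gt
  · exact .inl fun t ht ↦ by
      rw [hsol t ht, neg_one_mul, ← sub_eq_add_neg, sinh_div_cosh_sub_sinh]
  rcases eq_or_ne m 1 with rfl | hm_ne
  · exact .inr (.inl fun t ht ↦ by rw [hsol t ht, one_mul, sinh_div_cosh_add_sinh])
  · exact .inr (.inr ⟨_, add_one_div_sub_one_neg_or_one_lt hm_gt hm_ne, fun t ht ↦
      (hsol t ht).trans (sinh_div_cosh_add_mul_sinh_of_ne_one hm_ne t)⟩)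
end
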